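/- arXiv:2506.23877 — 5 statements merged into one kernel-verified Lean document; each statement's English description precedes it below -/
import Mathlib

section
/- Let X be a topological Markov shift with countable state space S and transition matrix A, and let φ : X → ℝ be summable with [φ]_{k+1} < ∞ for some integer k ≥ 1. If X contains a periodic point (i.e. some ω ∈ X with σ^m ω = ω for some m ≥ 1), then P(φ) = max_{T ∈ S/↔} P(φ|X_{M(T)}), and the maximum is attained by some equivalence class T. If X contains no periodic point, then P(φ) = −∞. -/
/-!
The proof encodes words as lists and studies the generating function `genFun A f U t`, the sum of
`(sup_{[w]} exp S_n f) * t ^ |w|` over all words `w` with letters in `U`. For `U` the whole alphabet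
and `t = exp (-c)` it converges if `P(f) < c`, and its convergence implies `P(f) ≤ c`.

Admissible words follow paths, so the letters of a word lying in one communication class `T` form a
single block. As weights are submultiplicative, this gives
`genFun U ≤ genFun (U \ T) * genFun T * genFun (U \ T)` (`genFun_le_mul`), so finitely many classes
can be removed one after the other without affecting convergence (`genFun_ne_top_of_classes`).

Given a real `e`, summability provides a finite set `F` of letters outside which the one-letter
weights sum to less than `exp e`. For `c ≥ e` and `t = exp (-c)`, the words avoiding the classes of
the letters in `F` contribute at most a convergent geometric series (`genFun_ne_top_of_small`). For
a class `T` carrying a loop, each word in `T` extends to a point of the subshift on `T`; by bounded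
distortion its weight is comparable to the weight, in that subshift, of the word with the last `k`
letters deleted, and the deleted letters cost only a finite factor
(`genFun_commClass_ne_top_of_loop`). A class without a loop is a single letter used at most once.
Hence `P(f) ≤ c` as soon as `c ≥ e` exceeds the pressures of the classes of `F` carrying a loop
(`exists_finset_pressure_le`).

Without periodic points no class carries a loop, so `P(f) ≤ e` for every `e`. With a periodic point
`P(f) > -∞`, and taking `e < P(f)` shows that one of the finitely many classes attains `P(f)`.
-/

open scoped ENNReal NNReal Topology
open Filter Set Metric

noncomputable section

/-- The shift transformation on one-sided sequences. -/
def shift {S : Type*} (ω : ℕ → S) : ℕ → S := fun n => ω (n + 1)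

/-- The topological Markov shift with transition `A`. -/
def TMS {S : Type*} (A : S → S → Prop) : Set (ℕ → S) := {ω | ∀ n, A (ω n) (ω (n + 1))}

/-- The cylinder set of a word `w` inside the TMS with transition `A`. -/
def cylSet {S : Type*} (A : S → S → Prop) (n : ℕ) (w : Fin n → S) : Set (ℕ → S) :=
  {ω | ω ∈ TMS A ∧ ∀ i : Fin n, ω i = w i}

/-- Birkhoff sum `S_n f`. -/
def birkhoff {S : Type*} (f : (ℕ → S) → ℝ) (n : ℕ) (ω : ℕ → S) : ℝ :=
  ∑ i ∈ Finset.range n, f (shift^[i] ω)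

/-- Partition function `Z_n(f) = Σ_w sup_{ω ∈ [w]} exp (S_n f ω)`
(the supremum of `exp` coincides with `exp` of the supremum; empty cylinders contribute `0`). -/
def pressureZ {S : Type*} (A : S → S → Prop) (f : (ℕ → S) → ℝ) (n : ℕ) : ℝ≥0∞ :=
  ∑' w : Fin n → S, ⨆ ω ∈ cylSet A n w, ENNReal.ofReal (Real.exp (birkhoff f n ω))

/-- Logarithm `ℝ≥0∞ → EReal`, with `log 0 = ⊥` and `log ⊤ = ⊤`. -/
def elog (x : ℝ≥0∞) : EReal :=
  if x = 0 then ⊥ else if x = ⊤ then ⊤ else ((Real.log x.toReal : ℝ) : EReal)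

/-- The topological pressure `P(f) = lim (1/n) log Z_n(f)` (as a limsup, which equals the
limit whenever the limit exists). -/
def pressure {S : Type*} (A : S → S → Prop) (f : (ℕ → S) → ℝ) : EReal :=
  Filter.limsup (fun n : ℕ => ((n : ℝ)⁻¹ : EReal) * elog (pressureZ A f n)) Filter.atTop

/-- A potential is summable if `Σ_s exp (sup_{[s]} f) < ∞`. -/
def SummablePot {S : Type*} (A : S → S → Prop) (f : (ℕ → S) → ℝ) : Prop :=
  pressureZ A f 1 ≠ ⊤

/-- There is an `A`-admissible word of length `≥ 2` from `a` to `b`. -/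
def Chain {S : Type*} (A : S → S → Prop) (a b : S) : Prop :=
  ∃ (m : ℕ) (w : ℕ → S), 1 ≤ m ∧ w 0 = a ∧ w m = b ∧ ∀ i < m, A (w i) (w (i + 1))

/-- Restriction of a transition matrix to a set of states. -/
def restrictT {S : Type*} (A : S → S → Prop) (C : Set S) : S → S → Prop :=
  fun i j => A i j ∧ i ∈ C ∧ j ∈ C

/-- The communication class (the class of `a` under `↔`). -/
def commClass {S : Type*} (A : S → S → Prop) (a : S) : Set S :=
  {b | a = b ∨ (Chain A a b ∧ Chain A b a)}

end

/-! ### Words, weights and generating functions -/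

/-- The weight `sup_{[w]} exp (S_n f)` of a word `w` of length `n`, with words encoded as lists;
it is `0` when the cylinder of `w` is empty. -/
noncomputable def wordWeight {S : Type*} (A : S → S → Prop) (f : (ℕ → S) → ℝ) (w : List S) :
    ℝ≥0∞ :=
  ⨆ ω ∈ cylSet A w.length w.get, ENNReal.ofReal (Real.exp (birkhoff f w.length ω))

open scoped Classical in
/-- The generating function `Σ_w (weight of w) * t ^ |w|` over all words `w` with letters in `U`.
The cylinders are those of the whole shift, not of the subshift on `U`. -/
noncomputable def genFun {S : Type*} (A : S → S → Prop) (f : (ℕ → S) → ℝ) (U : Set S)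
    (t : ℝ≥0∞) : ℝ≥0∞ :=
  ∑' w : List S, if ∀ s ∈ w, s ∈ U then wordWeight A f w * t ^ w.length else 0

section Words

variable {S : Type*} {A : S → S → Prop} {f : (ℕ → S) → ℝ}

lemma shift_iterate_apply (m : ℕ) (ω : ℕ → S) (i : ℕ) : (shift^[m] ω) i = ω (i + m) := by
  induction m generalizing ω i with
  | zero => rfl
  | succ m ih =>
    rw [Function.iterate_succ_apply, ih]
    simp only [shift]
    congr 1

lemma shift_iterate_mem {ω : ℕ → S} (h : ω ∈ TMS A) (m : ℕ) : shift^[m] ω ∈ TMS A := by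
  intro n
  rw [shift_iterate_apply, shift_iterate_apply]
  have := h (n + m)
  rwa [show n + 1 + m = n + m + 1 by ring]

lemma birkhoff_add (m n : ℕ) (ω : ℕ → S) :
    birkhoff f (m + n) ω = birkhoff f m ω + birkhoff f n (shift^[m] ω) := by
  simp only [birkhoff, Finset.sum_range_add]
  congr 1
  refine Finset.sum_congr rfl fun i _ => ?_
  rw [← Function.iterate_add_apply, add_comm]

lemma mem_cylSet_list {w : List S} {ω : ℕ → S} :
    ω ∈ cylSet A w.length w.get ↔ ω ∈ TMS A ∧ ∀ i (h : i < w.length), ω i = w[i] := by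
  simp [cylSet, Fin.forall_iff]

lemma le_wordWeight {w : List S} {ω : ℕ → S} (h : ω ∈ cylSet A w.length w.get) :
    ENNReal.ofReal (Real.exp (birkhoff f w.length ω)) ≤ wordWeight A f w :=
  le_iSup₂ (f := fun ω (_ : ω ∈ cylSet A w.length w.get) =>
    ENNReal.ofReal (Real.exp (birkhoff f w.length ω))) ω h

lemma exists_of_wordWeight_ne_zero {w : List S} (h : wordWeight A f w ≠ 0) :
    ∃ ω, ω ∈ cylSet A w.length w.get := by
  by_contra hc
  push Not at hc
  exact h (by simp [wordWeight, hc])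

lemma cylSet_append {u v : List S} {ω : ℕ → S}
    (h : ω ∈ cylSet A (u ++ v).length (u ++ v).get) :
    ω ∈ cylSet A u.length u.get ∧ shift^[u.length] ω ∈ cylSet A v.length v.get := by
  rw [mem_cylSet_list] at h
  refine ⟨mem_cylSet_list.2 ⟨h.1, fun i hi => ?_⟩,
    mem_cylSet_list.2 ⟨shift_iterate_mem h.1 _, fun i hi => ?_⟩⟩
  · rw [h.2 i (by simp; omega), List.getElem_append_left hi]
  · rw [shift_iterate_apply, h.2 _ (by simp; omega), List.getElem_append_right (by omega)]
    simp

lemma wordWeight_append_le (u v : List S) :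
    wordWeight A f (u ++ v) ≤ wordWeight A f u * wordWeight A f v := by
  refine iSup₂_le fun ω hω => ?_
  obtain ⟨h1, h2⟩ := cylSet_append hω
  rw [List.length_append, birkhoff_add, Real.exp_add, ENNReal.ofReal_mul (Real.exp_nonneg _)]
  exact mul_le_mul' (le_wordWeight h1) (le_wordWeight h2)

lemma wordWeight_nil_le : wordWeight A f [] ≤ 1 :=
  iSup₂_le fun ω _ => by simp [birkhoff]

lemma wordWeight_le_prod (w : List S) :
    wordWeight A f w ≤ (w.map fun s => wordWeight A f [s]).prod := by
  induction w with
  | nil => simpa using wordWeight_nil_le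
  | cons s w ih =>
    rw [List.map_cons, List.prod_cons]
    exact (wordWeight_append_le [s] w).trans (mul_le_mul_right ih _)

/-- Summing over lists amounts to summing over all lengths `n` and all words of length `n`. -/
lemma tsum_list (g : ℕ → ℝ≥0∞) :
    ∑' w : List S, g w.length * wordWeight A f w = ∑' n, g n * pressureZ A f n := by
  have h := (List.equivSigmaTuple (α := S)).tsum_eq
    (fun p : Σ n, Fin n → S => g p.1 *
      ⨆ ω ∈ cylSet A p.1 p.2, ENNReal.ofReal (Real.exp (birkhoff f p.1 ω)))
  rw [ENNReal.tsum_sigma'] at h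
  simp only [ENNReal.tsum_mul_left] at h
  exact h

lemma genFun_univ (t : ℝ≥0∞) :
    genFun A f univ t = ∑' n, t ^ n * pressureZ A f n := by
  rw [← tsum_list]
  simp [genFun, mul_comm]

lemma pressureZ_one : pressureZ A f 1 = ∑' s, wordWeight A f [s] := by
  rw [pressureZ, ← (Equiv.funUnique (Fin 1) S).symm.tsum_eq]
  refine tsum_congr fun s => ?_
  have : ∀ ω, ω ∈ cylSet A 1 ((Equiv.funUnique (Fin 1) S).symm s) ↔
      ω ∈ cylSet A [s].length [s].get := by
    intro ω
    simp [cylSet]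
  simp only [this, wordWeight]
  rfl

/-- Sum over the words of length `n` of a product weight. -/
lemma tsum_prod_fin (y : S → ℝ≥0∞) (n : ℕ) :
    ∑' w : Fin n → S, ∏ i, y (w i) = (∑' s, y s) ^ n := by
  induction n with
  | zero => simp
  | succ n ih =>
    rw [← (Fin.consEquiv fun _ : Fin (n + 1) => S).tsum_eq, ENNReal.tsum_prod', pow_succ', ← ih,
      ← ENNReal.tsum_mul_right]
    refine tsum_congr fun s => ?_
    rw [← ENNReal.tsum_mul_left]
    refine tsum_congr fun w => ?_
    simp [Fin.prod_univ_succ, Fin.consEquiv]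

lemma tsum_list_prod (g : ℕ → ℝ≥0∞) (y : S → ℝ≥0∞) :
    ∑' w : List S, g w.length * (w.map y).prod = ∑' n, g n * (∑' s, y s) ^ n := by
  have h := (List.equivSigmaTuple (α := S)).tsum_eq
    (fun p : Σ n, Fin n → S => g p.1 * ∏ i, y (p.2 i))
  rw [ENNReal.tsum_sigma'] at h
  simp only [ENNReal.tsum_mul_left, tsum_prod_fin] at h
  rw [← h]
  refine tsum_congr fun w => ?_
  have hw : (w.map y).prod = ∏ i : Fin w.length, y (w.get i) := by
    rw [← List.prod_ofFn]
    congr 1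
    apply List.ext_getElem <;> simp
  rw [hw]
  rfl

lemma pressureZ_ne_top (h : SummablePot A f) (n : ℕ) : pressureZ A f n ≠ ⊤ := by
  have h1 := tsum_list (A := A) (f := f) (fun m => if m = n then 1 else 0)
  have h2 := tsum_list_prod (fun m => if m = n then 1 else 0) (fun s => wordWeight A f [s])
  simp only [ite_mul, one_mul, zero_mul, tsum_ite_eq] at h1 h2
  rw [← pressureZ_one] at h2
  refine ne_top_of_le_ne_top (ENNReal.pow_ne_top h (n := n)) ?_
  rw [← h1, ← h2]
  refine ENNReal.tsum_le_tsum fun w => ?_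
  split_ifs
  · exact wordWeight_le_prod w
  · exact le_rfl

/-- Words of bounded length contribute finitely much. -/
lemma tsum_short_ne_top (h : SummablePot A f) (k : ℕ) {t : ℝ≥0∞} (ht : t ≠ ⊤) :
    ∑' w : List S, (if w.length ≤ k then t ^ w.length else 0) * wordWeight A f w ≠ ⊤ := by
  rw [tsum_list (fun n => if n ≤ k then t ^ n else 0),
    tsum_eq_sum (s := Finset.range (k + 1)) (fun n hn => by
      rw [if_neg (by simpa [Nat.lt_succ_iff] using hn), zero_mul])]
  refine ENNReal.sum_ne_top.2 fun n _ => ENNReal.mul_ne_top ?_ (pressureZ_ne_top h n)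
  split_ifs
  · exact ENNReal.pow_ne_top ht
  · simp

/-- If the one-letter weights over `U` are small, the generating function over `U` is dominated by
a convergent geometric series. -/
lemma genFun_ne_top_of_small {U : Set S} {t : ℝ≥0∞}
    (h : ∑' s, U.indicator (fun s => wordWeight A f [s]) s * t < 1) :
    genFun A f U t ≠ ⊤ := by
  have h2 := tsum_list_prod (fun _ => 1) fun s => U.indicator (fun s => wordWeight A f [s]) s * t
  simp only [one_mul, ENNReal.tsum_geometric] at h2
  refine ne_top_of_le_ne_top (b := (1 - ∑' s, U.indicator (fun s => wordWeight A f [s]) s * t)⁻¹)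
    (ENNReal.inv_ne_top.2 (tsub_pos_of_lt h).ne') ?_
  rw [← h2]
  refine ENNReal.tsum_le_tsum fun w => ?_
  split_ifs with hw
  · rw [List.prod_map_mul, List.map_congr_left (g := fun s => wordWeight A f [s])
      (fun s hs => Set.indicator_of_mem (hw s hs) _)]
    simpa using mul_le_mul_left (wordWeight_le_prod w) _
  · exact zero_le

end Words

/-! ### Pressure as an exponential growth rate -/

section Growth

variable {S : Type*} {A : S → S → Prop} {f : (ℕ → S) → ℝ}

lemma pressure_eq_expGrowthSup : pressure A f = ExpGrowth.expGrowthSup (pressureZ A f) := by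
  unfold pressure ExpGrowth.expGrowthSup
  congr 1
  funext n
  rw [mul_comm, EReal.div_eq_inv_mul, mul_comm]
  rfl

/-- The pressure is minus the logarithm of the radius of convergence of the generating function;
this lemma and `genFun_ne_top_of_pressure_lt` are the two inequalities. -/
lemma pressure_le_of_genFun_ne_top {c : ℝ}
    (h : genFun A f univ (ENNReal.ofReal (Real.exp (-c))) ≠ ⊤) : pressure A f ≤ c := by
  have hpos : ENNReal.ofReal (Real.exp (-c)) ≠ 0 := by simp [Real.exp_pos]
  have hlog : ENNReal.log (ENNReal.ofReal (Real.exp (-c)))⁻¹ = (c : EReal) := by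
    rw [ENNReal.log_inv, ENNReal.log_ofReal_of_pos (Real.exp_pos _), Real.log_exp]
    simp
  rw [pressure_eq_expGrowthSup, ← hlog, ← ExpGrowth.expGrowthSup_pow]
  refine ExpGrowth.expGrowthSup_le_of_eventually_le h (Eventually.of_forall fun n => ?_)
  rw [← ENNReal.inv_pow, ← div_eq_mul_inv,
    ENNReal.le_div_iff_mul_le (Or.inl (pow_ne_zero _ hpos))
      (Or.inl (ENNReal.pow_ne_top ENNReal.ofReal_ne_top)), genFun_univ, mul_comm]
  exact ENNReal.le_tsum (f := fun n => ENNReal.ofReal (Real.exp (-c)) ^ n * pressureZ A f n) n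

lemma genFun_ne_top_of_pressure_lt {c : ℝ} (hfin : ∀ n, pressureZ A f n ≠ ⊤)
    (h : pressure A f < c) : genFun A f univ (ENNReal.ofReal (Real.exp (-c))) ≠ ⊤ := by
  rw [pressure_eq_expGrowthSup] at h
  obtain ⟨b, hb, hbc⟩ := EReal.lt_iff_exists_real_btwn.1 h
  have hbc' : b < c := by exact_mod_cast hbc
  obtain ⟨N, hN⟩ := eventually_atTop.1 (ExpGrowth.eventually_le_exp hb)
  have hr : ENNReal.ofReal (Real.exp (b - c)) < 1 := by
    rw [ENNReal.ofReal_lt_one, Real.exp_lt_one_iff]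
    linarith
  rw [genFun_univ, ← Summable.sum_add_tsum_nat_add' (k := N) ENNReal.summable]
  refine ENNReal.add_ne_top.2 ⟨ENNReal.sum_ne_top.2 fun n _ =>
    ENNReal.mul_ne_top (ENNReal.pow_ne_top ENNReal.ofReal_ne_top) (hfin n), ?_⟩
  refine ne_top_of_le_ne_top
    (b := ∑' n, ENNReal.ofReal (Real.exp (b - c)) ^ n) ?_ ?_
  · rw [ENNReal.tsum_geometric]
    exact ENNReal.inv_ne_top.2 (tsub_pos_of_lt hr).ne'
  · refine le_trans ?_ (ENNReal.tsum_comp_le_tsum_of_injective (add_left_injective N) _)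
    refine ENNReal.tsum_le_tsum fun n => ?_
    refine (mul_le_mul_right (hN (n + N) (by omega)) _).trans ?_
    have : EReal.exp ((b : EReal) * ((n + N : ℕ) : EReal)) =
        ENNReal.ofReal (Real.exp b) ^ (n + N) := by
      rw [← ENNReal.ofReal_pow (Real.exp_nonneg _), ← Real.exp_nat_mul, mul_comm,
        ← EReal.exp_coe]
      congr 1
    rw [this, ← mul_pow, ← ENNReal.ofReal_mul (Real.exp_nonneg _), ← Real.exp_add,
      show -c + b = b - c by ring]

lemma mem_TMS_restrictT {C : Set S} {ω : ℕ → S} :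
    ω ∈ TMS (restrictT A C) ↔ ω ∈ TMS A ∧ ∀ n, ω n ∈ C :=
  ⟨fun h => ⟨fun n => (h n).1, fun n => (h n).2.1⟩, fun h n => ⟨h.1 n, h.2 n, h.2 _⟩⟩

lemma pressureZ_restrictT_le (C : Set S) (n : ℕ) :
    pressureZ (restrictT A C) f n ≤ pressureZ A f n :=
  ENNReal.tsum_le_tsum fun _ => biSup_mono fun _ h => ⟨(mem_TMS_restrictT.1 h.1).1, h.2⟩

lemma pressure_restrictT_le (C : Set S) : pressure (restrictT A C) f ≤ pressure A f := by
  rw [pressure_eq_expGrowthSup, pressure_eq_expGrowthSup]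
  exact ExpGrowth.expGrowthSup_monotone (pressureZ_restrictT_le C)

/-- The potential is bounded below along a periodic orbit, and such a bound is also a lower bound
for the pressure. -/
lemma pressure_ne_bot_of_periodic {ω : ℕ → S} (hω : ω ∈ TMS A) {m : ℕ} (hm : 1 ≤ m)
    (hp : shift^[m] ω = ω) : pressure A f ≠ ⊥ := by
  set B : ℝ := ∑ j ∈ Finset.range m, |f (shift^[j] ω)|
  have hB : ∀ i, -B ≤ f (shift^[i] ω) := by
    intro i
    have hper : Function.IsPeriodicPt shift m ω := hp
    rw [← hper.iterate_mod_apply i]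
    have h1 : |f (shift^[i % m] ω)| ≤ B :=
      Finset.single_le_sum (f := fun j => |f (shift^[j] ω)|) (fun _ _ => abs_nonneg _)
        (Finset.mem_range.2 (Nat.mod_lt _ hm))
    linarith [neg_abs_le (f (shift^[i % m] ω))]
  have hS : ∀ n : ℕ, (n : ℝ) * -B ≤ birkhoff f n ω := by
    intro n
    have := Finset.card_nsmul_le_sum (Finset.range n) (fun i => f (shift^[i] ω)) (-B)
      (fun i _ => hB i)
    simpa [birkhoff] using this
  have hle : ((-B : ℝ) : EReal) ≤ pressure A f := by
    have hlog : ENNReal.log (ENNReal.ofReal (Real.exp (-B))) = ((-B : ℝ) : EReal) := by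
      rw [ENNReal.log_ofReal_of_pos (Real.exp_pos _), Real.log_exp]
    rw [pressure_eq_expGrowthSup, ← hlog, ← ExpGrowth.expGrowthSup_pow]
    refine ExpGrowth.expGrowthSup_monotone fun n => ?_
    refine le_trans ?_ (ENNReal.le_tsum (fun i : Fin n => ω i))
    refine le_trans ?_ (le_iSup₂ (f := fun υ (_ : υ ∈ cylSet A n fun i : Fin n => ω i) =>
      ENNReal.ofReal (Real.exp (birkhoff f n υ))) ω ⟨hω, fun _ => rfl⟩)
    rw [← ENNReal.ofReal_pow (Real.exp_nonneg _), ← Real.exp_nat_mul]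
    exact ENNReal.ofReal_le_ofReal (Real.exp_le_exp.2 (hS n))
  exact ((EReal.bot_lt_coe _).trans_le hle).ne'

end Growth

/-! ### Communication classes -/

section Classes

variable {S : Type*} {A : S → S → Prop} {f : (ℕ → S) → ℝ}

lemma chain_of_TMS {ω : ℕ → S} (h : ω ∈ TMS A) {i j : ℕ} (hij : i < j) :
    Relation.TransGen A (ω i) (ω j) := by
  induction j, hij using Nat.le_induction with
  | base => exact .single (h i)
  | succ j _ ih => exact ih.tail (h j)

lemma chain_iff_transGen {a b : S} : Chain A a b ↔ Relation.TransGen A a b := by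
  constructor
  · rintro ⟨m, w, hm, rfl, rfl, hw⟩
    induction m, hm using Nat.le_induction with
    | base => exact .single (hw 0 (by omega))
    | succ m _ ih => exact (ih fun i hi => hw i (by omega)).tail (hw m (by omega))
  · intro h
    induction h with
    | @single b h => exact ⟨1, fun i => if i = 0 then a else b, le_rfl, by simp, by simp, by
        intro i hi; obtain rfl : i = 0 := by omega
        simpa⟩
    | @tail b c _ hbc ih =>
      obtain ⟨m, w, hm, h0, h1, hw⟩ := ih
      refine ⟨m + 1, fun i => if i ≤ m then w i else c, by omega, by simp [h0], by simp, ?_⟩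
      intro i hi
      rcases Nat.lt_or_ge i m with hlt | hge
      · simpa [hlt.le, Nat.succ_le_of_lt hlt] using hw i hlt
      · obtain rfl : i = m := by omega
        simpa [h1]

lemma mem_commClass_iff {a b : S} :
    b ∈ commClass A a ↔ a = b ∨ (Relation.TransGen A a b ∧ Relation.TransGen A b a) := by
  simp only [commClass, Set.mem_ofPred_eq, chain_iff_transGen]

/-- Communication classes are convex for the path relation. -/
lemma commClass_convex {a x y z : S} (hx : x ∈ commClass A a) (hz : z ∈ commClass A a)
    (hxy : Relation.TransGen A x y) (hyz : Relation.TransGen A y z) : y ∈ commClass A a := by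
  rw [mem_commClass_iff] at *
  right
  constructor
  · rcases hx with rfl | hx
    · exact hxy
    · exact hx.1.trans hxy
  · rcases hz with rfl | hz
    · exact hyz
    · exact hyz.trans hz.2

lemma exists_succ_of_loop {a b : S} (ha : Relation.TransGen A a a) (hb : b ∈ commClass A a) :
    ∃ c ∈ commClass A a, A b c := by
  have hb' : Relation.TransGen A a b ∧ Relation.TransGen A b a := by
    rcases mem_commClass_iff.1 hb with rfl | h
    exacts [⟨ha, ha⟩, h]
  obtain ⟨c, hbc, hca⟩ := Relation.TransGen.head'_iff.1 hb'.2
  refine ⟨c, mem_commClass_iff.2 ?_, hbc⟩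
  rcases Relation.reflTransGen_iff_eq_or_transGen.1 hca with h | h
  · exact Or.inl h
  · exact Or.inr ⟨hb'.1.tail hbc, h⟩

/-- If `a` lies on a loop, every prefix of a point of the shift with letters in the class of `a` is
also the prefix of a point of the subshift of that class. -/
lemma exists_extension {a : S} (ha : Relation.TransGen A a a) {ω : ℕ → S} (hω : ω ∈ TMS A)
    (n : ℕ) (hn : ∀ i < n, ω i ∈ commClass A a) :
    ∃ υ ∈ TMS (restrictT A (commClass A a)), ∀ i < n, υ i = ω i := by
  choose! g hg hgA using fun b (hb : b ∈ commClass A a) => exists_succ_of_loop ha hb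
  have hiter : ∀ b ∈ commClass A a, ∀ i, g^[i] b ∈ commClass A a := by
    intro b hb i
    induction i with
    | zero => exact hb
    | succ i ih => rw [Function.iterate_succ_apply']; exact hg _ ih
  rcases n with _ | n
  · have haa : a ∈ commClass A a := Or.inl rfl
    refine ⟨fun i => g^[i] a, mem_TMS_restrictT.2 ⟨fun i => ?_, hiter a haa⟩, by simp⟩
    simp only [Function.iterate_succ_apply']
    exact hgA _ (hiter a haa i)
  · refine ⟨fun i => if i ≤ n then ω i else g^[i - n] (ω n), mem_TMS_restrictT.2
      ⟨fun i => ?_, fun i => ?_⟩, fun i hi => by simp [Nat.lt_succ_iff.1 hi]⟩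
    · rcases lt_trichotomy i n with h | rfl | h
      · simpa [h.le, Nat.succ_le_of_lt h] using hω i
      · simpa using hgA _ (hn i (by omega))
      · have h1 : ¬ i ≤ n := by omega
        have h2 : ¬ i + 1 ≤ n := by omega
        simp only [h1, h2, if_false]
        rw [show i + 1 - n = (i - n) + 1 by omega, Function.iterate_succ_apply']
        exact hgA _ (hiter _ (hn n (by omega)) _)
    · by_cases h : i ≤ n
      · simpa [h] using hn i (by omega)
      · simpa [h] using hiter _ (hn n (by omega)) _

lemma exists_periodic_of_loop {a : S} (h : Chain A a a) :
    ∃ ω ∈ TMS A, ∃ m, 1 ≤ m ∧ shift^[m] ω = ω := by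
  obtain ⟨m, w, hm, h0, h1, hw⟩ := h
  refine ⟨fun i => w (i % m), fun i => ?_, m, hm, ?_⟩
  · have hlt := Nat.mod_lt i hm
    have := hw (i % m) hlt
    simp only
    rcases Nat.lt_or_ge (i % m + 1) m with h | h
    · rwa [Nat.add_mod, Nat.mod_eq_of_lt (show 1 < m by omega), Nat.mod_eq_of_lt h]
    · have he : i % m + 1 = m := by omega
      have hz : (i + 1) % m = 0 := by
        rw [← Nat.mod_add_mod, he, Nat.mod_self]
      rw [hz, h0]
      rwa [he, h1] at this
  · funext i
    rw [shift_iterate_apply]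
    simp

lemma periodic_mem_commClass {ω : ℕ → S} (hω : ω ∈ TMS A) {m : ℕ} (hm : 1 ≤ m)
    (hp : shift^[m] ω = ω) (n : ℕ) : ω n ∈ commClass A (ω 0) := by
  rw [mem_commClass_iff]
  have hper : ∀ j, ω (j * m) = ω 0 := by
    intro j
    have h1 : Function.IsPeriodicPt shift (j * m) ω :=
      Function.IsPeriodicPt.const_mul (f := shift) (show Function.IsPeriodicPt shift m ω from hp) j
    have h2 := congrFun h1 0
    rwa [shift_iterate_apply, zero_add] at h2
  rcases Nat.eq_zero_or_pos n with rfl | hn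
  · exact Or.inl rfl
  · refine Or.inr ⟨chain_of_TMS hω hn, ?_⟩
    rw [← hper (n + 1)]
    exact chain_of_TMS hω (by nlinarith)

end Classes

/-! ### Splitting words along communication classes -/

section Decomposition

variable {S : Type*} {A : S → S → Prop} {f : (ℕ → S) → ℝ}

lemma pairwise_of_mem_cylSet {w : List S} {ω : ℕ → S} (h : ω ∈ cylSet A w.length w.get) :
    w.Pairwise (Relation.TransGen A) := by
  rw [mem_cylSet_list] at h
  rw [List.pairwise_iff_getElem]
  intro i j hi hj hij
  rw [← h.2 i hi, ← h.2 j hj]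
  exact chain_of_TMS h.1 hij

/-- The letters from a convex set `T` form a single block of an admissible word. -/
lemma exists_split {R : S → S → Prop} {T : Set S}
    (hT : ∀ x ∈ T, ∀ z ∈ T, ∀ y, R x y → R y z → y ∈ T) {w : List S} (hw : w.Pairwise R) :
    ∃ u v u' : List S, w = u ++ (v ++ u') ∧ (∀ s ∈ u, s ∉ T) ∧ (∀ s ∈ v, s ∈ T) ∧
      ∀ s ∈ u', s ∉ T := by
  induction w with
  | nil => exact ⟨[], [], [], by simp⟩
  | cons s w ih =>
    rw [List.pairwise_cons] at hw
    obtain ⟨u, v, u', rfl, hu, hv, hu'⟩ := ih hw.2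
    by_cases hs : s ∈ T
    · rcases u with _ | ⟨x, u⟩
      · exact ⟨[], s :: v, u', by simp, by simp, by simpa using ⟨hs, hv⟩, hu'⟩
      · rcases v with _ | ⟨y, v⟩
        · refine ⟨[], [s], (x :: u) ++ u', by simp, by simp, by simpa using hs, ?_⟩
          intro z hz
          rcases List.mem_append.1 hz with h | h
          exacts [hu z h, hu' z h]
        · -- here `s, y ∈ T` while `x ∉ T` lies between them
          have hxy : R x y := by
            have h2 := hw.2
            rw [List.cons_append, List.pairwise_cons] at h2
            exact h2.1 y (by simp)
          exact absurd (hT s hs y (hv y (by simp)) x (hw.1 x (by simp)) hxy) (hu x (by simp))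
    · exact ⟨s :: u, v, u', by simp, by simpa using ⟨hs, hu⟩, hv, hu'⟩

/-- Removing one communication class: a word in `U` consists of a word in `U \ T`, a word in `T`
and another word in `U \ T`. -/
lemma genFun_le_mul (U : Set S) (a : S) (t : ℝ≥0∞) :
    genFun A f U t ≤ genFun A f (U \ commClass A a) t *
      (genFun A f (commClass A a) t * genFun A f (U \ commClass A a) t) := by
  classical
  set T := commClass A a
  have hsplit : ∀ w : List S, ∃ p : List S × List S × List S, w = p.1 ++ (p.2.1 ++ p.2.2) ∧
      (wordWeight A f w ≠ 0 → (∀ s ∈ p.1, s ∉ T) ∧ (∀ s ∈ p.2.1, s ∈ T) ∧ ∀ s ∈ p.2.2, s ∉ T) := by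
    intro w
    by_cases hw : wordWeight A f w = 0
    · exact ⟨(w, [], []), by simp, fun h => absurd hw h⟩
    · obtain ⟨ω, hω⟩ := exists_of_wordWeight_ne_zero hw
      obtain ⟨u, v, u', h, h'⟩ := exists_split (T := T)
        (fun x hx z hz y hxy hyz => commClass_convex hx hz hxy hyz) (pairwise_of_mem_cylSet hω)
      exact ⟨(u, v, u'), h, fun _ => h'⟩
  choose p hp hp' using hsplit
  have hinj : Function.Injective p := fun w w' h => by rw [hp w, hp w', h]
  set g : Set S → List S → ℝ≥0∞ := fun V w =>
    if ∀ s ∈ w, s ∈ V then wordWeight A f w * t ^ w.length else 0 with hg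
  have hprod : genFun A f (U \ T) t * (genFun A f T t * genFun A f (U \ T) t) =
      ∑' q : List S × List S × List S, g (U \ T) q.1 * (g T q.2.1 * g (U \ T) q.2.2) := by
    rw [ENNReal.tsum_prod']
    simp only [ENNReal.tsum_mul_left, ENNReal.tsum_prod', ENNReal.tsum_mul_right]
    simp only [genFun, hg]
  rw [hprod]
  refine le_trans ?_ (ENNReal.tsum_comp_le_tsum_of_injective hinj _)
  refine ENNReal.tsum_le_tsum fun w => ?_
  split_ifs with hU
  · by_cases hw : wordWeight A f w = 0
    · simp [hw]
    · obtain ⟨h1, h2, h3⟩ := hp' w hw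
      have hmem : ∀ s, s ∈ (p w).1 ∨ s ∈ (p w).2.1 ∨ s ∈ (p w).2.2 → s ∈ U := by
        intro s hs
        apply hU
        rw [hp w]
        simpa using hs
      simp only [hg]
      rw [if_pos fun s hs => ⟨hmem s (by tauto), h1 s hs⟩, if_pos h2,
        if_pos fun s hs => ⟨hmem s (by tauto), h3 s hs⟩]
      have hle : wordWeight A f w ≤ wordWeight A f (p w).1 *
          (wordWeight A f (p w).2.1 * wordWeight A f (p w).2.2) := by
        conv_lhs => rw [hp w]
        exact (wordWeight_append_le _ _).trans (mul_le_mul_right (wordWeight_append_le _ _) _)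
      have hlen : w.length = (p w).1.length + ((p w).2.1.length + (p w).2.2.length) := by
        conv_lhs => rw [hp w]
        simp
      rw [hlen, pow_add, pow_add]
      refine (mul_le_mul_left hle _).trans (le_of_eq ?_)
      ring
  · exact zero_le

/-- If the generating function is finite on finitely many classes and on the part of `U` outside
them, then it is finite on `U`. -/
lemma genFun_ne_top_of_classes {t : ℝ≥0∞} (F : Finset S) (U : Set S)
    (hF : ∀ a ∈ F, genFun A f (commClass A a) t ≠ ⊤)
    (hU : genFun A f {s ∈ U | ∀ a ∈ F, s ∉ commClass A a} t ≠ ⊤) : genFun A f U t ≠ ⊤ := by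
  classical
  induction F using Finset.induction_on generalizing U with
  | empty => simpa using hU
  | insert a F _ ih =>
    have h1 : genFun A f (U \ commClass A a) t ≠ ⊤ := by
      refine ih _ (fun b hb => hF b (Finset.mem_insert_of_mem hb)) ?_
      convert hU using 2
      ext s
      simp [and_assoc]
    refine ne_top_of_le_ne_top ?_ (genFun_le_mul U a t)
    exact ENNReal.mul_ne_top h1 (ENNReal.mul_ne_top (hF a (Finset.mem_insert_self _ _)) h1)

end Decomposition

/-! ### Bounding the contribution of a class -/

section ClassBound

variable {S : Type*} {A : S → S → Prop} {f : (ℕ → S) → ℝ}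

/-- Bounded distortion: two points agreeing on `n` letters have comparable Birkhoff sums of
length `n - k` (truncated subtraction). -/
lemma birkhoff_distortion {θ C : ℝ} (hθ : θ ∈ Set.Ioo (0 : ℝ) 1) {k : ℕ}
    (hLip : ∀ n, k + 1 ≤ n → ∀ ω ∈ TMS A, ∀ υ ∈ TMS A,
      (∀ i < n, ω i = υ i) → |f ω - f υ| ≤ C * θ ^ n)
    {ω υ : ℕ → S} (hω : ω ∈ TMS A) (hυ : υ ∈ TMS A) {n : ℕ} (h : ∀ i < n, υ i = ω i) :
    birkhoff f (n - k) ω ≤ |C| * (1 - θ)⁻¹ + birkhoff f (n - k) υ := by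
  have hterm : ∀ i ∈ Finset.range (n - k),
      f (shift^[i] ω) - f (shift^[i] υ) ≤ |C| * θ ^ (n - k - 1 - i) := by
    intro i hi
    rw [Finset.mem_range] at hi
    have h1 := hLip (n - i) (by omega) _ (shift_iterate_mem hω i) _ (shift_iterate_mem hυ i)
      (fun j hj => by
        rw [shift_iterate_apply, shift_iterate_apply, h _ (by omega)])
    calc f (shift^[i] ω) - f (shift^[i] υ) ≤ C * θ ^ (n - i) := (le_abs_self _).trans h1
      _ ≤ |C| * θ ^ (n - i) :=
        mul_le_mul_of_nonneg_right (le_abs_self C) (pow_nonneg hθ.1.le _)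
      _ ≤ |C| * θ ^ (n - k - 1 - i) :=
        mul_le_mul_of_nonneg_left (pow_le_pow_of_le_one hθ.1.le hθ.2.le (by omega))
          (abs_nonneg C)
  have hsum := Finset.sum_le_sum hterm
  rw [Finset.sum_sub_distrib, ← Finset.mul_sum, Finset.sum_range_reflect (fun j => θ ^ j)] at hsum
  have hgeom : ∑ j ∈ Finset.range (n - k), θ ^ j ≤ (1 - θ)⁻¹ := by
    rw [← tsum_geometric_of_lt_one hθ.1.le hθ.2]
    exact (summable_geometric_of_lt_one hθ.1.le hθ.2).sum_le_tsum _
      fun _ _ => pow_nonneg hθ.1.le _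
  have := mul_le_mul_of_nonneg_left hgeom (abs_nonneg C)
  simp only [birkhoff]
  linarith

/-- The generating function of a class computed with cylinders of the whole shift is finite as soon
as the one computed in the subshift of the class is, if the class carries a loop. Words in the
class are compared after deleting their last `k` letters, where the potential has no regularity. -/
lemma genFun_commClass_ne_top_of_loop {θ C : ℝ} (hθ : θ ∈ Set.Ioo (0 : ℝ) 1) {k : ℕ}
    (hsum : SummablePot A f)
    (hLip : ∀ n, k + 1 ≤ n → ∀ ω ∈ TMS A, ∀ υ ∈ TMS A,
      (∀ i < n, ω i = υ i) → |f ω - f υ| ≤ C * θ ^ n)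
    {a : S} (ha : Relation.TransGen A a a) {t : ℝ≥0∞} (ht : t ≠ ⊤)
    (h : genFun (restrictT A (commClass A a)) f univ t ≠ ⊤) :
    genFun A f (commClass A a) t ≠ ⊤ := by
  set T := commClass A a
  set K : ℝ≥0∞ := ENNReal.ofReal (Real.exp (|C| * (1 - θ)⁻¹))
  have hkey : ∀ w : List S, (∀ s ∈ w, s ∈ T) → wordWeight A f w ≤
      K * (wordWeight (restrictT A T) f (w.take (w.length - k)) *
        wordWeight A f (w.drop (w.length - k))) := by
    intro w hw
    refine iSup₂_le fun ω hω => ?_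
    have hω' := mem_cylSet_list.1 hω
    obtain ⟨υ, hυ, hυω⟩ := exists_extension ha hω'.1 w.length
      (fun i hi => by rw [hω'.2 i hi]; exact hw _ (List.getElem_mem hi))
    have hlu : (w.take (w.length - k)).length = w.length - k := by simp
    have hυu : υ ∈ cylSet (restrictT A T) (w.take (w.length - k)).length
        (w.take (w.length - k)).get := by
      refine mem_cylSet_list.2 ⟨hυ, fun i hi => ?_⟩
      rw [hlu] at hi
      rw [hυω i (by omega), hω'.2 i (by omega)]
      simp
    have hωuv : ω ∈ cylSet A (w.take (w.length - k) ++ w.drop (w.length - k)).length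
        (w.take (w.length - k) ++ w.drop (w.length - k)).get := by
      rwa [List.take_append_drop]
    have hv := le_wordWeight (f := f) (cylSet_append hωuv).2
    have hu := le_wordWeight (f := f) hυu
    rw [hlu] at hv hu
    have hlen : w.length = (w.length - k) + (w.drop (w.length - k)).length := by
      simp
    have hd := birkhoff_distortion hθ hLip hω'.1 (mem_TMS_restrictT.1 hυ).1 hυω
    calc ENNReal.ofReal (Real.exp (birkhoff f w.length ω))
        = ENNReal.ofReal (Real.exp (birkhoff f (w.length - k) ω)) *
          ENNReal.ofReal (Real.exp (birkhoff f (w.drop (w.length - k)).length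
            (shift^[w.length - k] ω))) := by
          rw [← ENNReal.ofReal_mul (Real.exp_nonneg _), ← Real.exp_add, ← birkhoff_add, ← hlen]
      _ ≤ (K * ENNReal.ofReal (Real.exp (birkhoff f (w.length - k) υ))) *
          wordWeight A f (w.drop (w.length - k)) := by
          refine mul_le_mul' ?_ hv
          rw [← ENNReal.ofReal_mul (Real.exp_nonneg _), ← Real.exp_add]
          exact ENNReal.ofReal_le_ofReal (Real.exp_le_exp.2 hd)
      _ ≤ _ := by
          rw [mul_assoc]
          exact mul_le_mul_right (mul_le_mul_left hu _) _
  set G : List S × List S → ℝ≥0∞ := fun q =>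
    wordWeight (restrictT A T) f q.1 * t ^ q.1.length *
      ((if q.2.length ≤ k then t ^ q.2.length else 0) * wordWeight A f q.2) with hG
  have hGsum : ∑' q, G q ≠ ⊤ := by
    rw [ENNReal.tsum_prod']
    simp only [hG, ENNReal.tsum_mul_left, ENNReal.tsum_mul_right]
    refine ENNReal.mul_ne_top ?_ (tsum_short_ne_top hsum k ht)
    simpa [genFun] using h
  have hinj : Function.Injective fun w : List S =>
      (w.take (w.length - k), w.drop (w.length - k)) := by
    intro w w' h
    have h1 := congrArg (fun q : List S × List S => q.1 ++ q.2) h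
    simpa only [List.take_append_drop] using h1
  refine ne_top_of_le_ne_top (ENNReal.mul_ne_top (a := K) ENNReal.ofReal_ne_top hGsum) ?_
  refine le_trans ?_ (mul_le_mul_right (ENNReal.tsum_comp_le_tsum_of_injective hinj G) K)
  rw [← ENNReal.tsum_mul_left]
  refine ENNReal.tsum_le_tsum fun w => ?_
  split_ifs with hw
  · refine (mul_le_mul_left (hkey w hw) _).trans (le_of_eq ?_)
    simp only [hG]
    rw [if_pos (by simp; omega)]
    have hpow : t ^ w.length =
        t ^ (w.take (w.length - k)).length * t ^ (w.drop (w.length - k)).length := by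
      rw [← pow_add]
      congr 1
      simp
    rw [hpow]
    ring
  · exact zero_le

/-- A class without a loop is a single letter that no admissible word repeats. -/
lemma genFun_commClass_ne_top_of_no_loop (hsum : SummablePot A f) {a : S}
    (ha : ¬ Relation.TransGen A a a) {t : ℝ≥0∞} (ht : t ≠ ⊤) :
    genFun A f (commClass A a) t ≠ ⊤ := by
  refine ne_top_of_le_ne_top (tsum_short_ne_top hsum 1 ht) (ENNReal.tsum_le_tsum fun w => ?_)
  split_ifs with hw hlen
  · rw [mul_comm]
  · by_cases h0 : wordWeight A f w = 0
    · simp [h0]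
    · obtain ⟨ω, hω⟩ := exists_of_wordWeight_ne_zero h0
      have hpw := List.pairwise_iff_getElem.1 (pairwise_of_mem_cylSet hω) 0 1 (by omega) (by omega)
        one_pos
      have hmem : ∀ s ∈ w, s = a := fun s hs => by
        rcases mem_commClass_iff.1 (hw s hs) with h | h
        · exact h.symm
        · exact absurd (h.1.trans h.2) ha
      rw [hmem _ (List.getElem_mem _), hmem _ (List.getElem_mem _)] at hpw
      exact absurd hpw ha
  · exact zero_le
  · exact zero_le

/-- For every level `e` there are finitely many classes such that any `c ≥ e` exceeding the
pressures of these classes is at least the whole pressure; classes without a loop need not be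
considered. -/
lemma exists_finset_pressure_le {θ C : ℝ} (hθ : θ ∈ Set.Ioo (0 : ℝ) 1) {k : ℕ}
    (hsum : SummablePot A f)
    (hLip : ∀ n, k + 1 ≤ n → ∀ ω ∈ TMS A, ∀ υ ∈ TMS A,
      (∀ i < n, ω i = υ i) → |f ω - f υ| ≤ C * θ ^ n) (e : ℝ) :
    ∃ F : Finset S, ∀ c : ℝ, e ≤ c →
      (∀ a ∈ F, ¬ Chain A a a ∨ pressure (restrictT A (commClass A a)) f < c) →
      pressure A f ≤ c := by
  have hs : ∑' s, wordWeight A f [s] ≠ ⊤ := by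
    rw [← pressureZ_one]; exact hsum
  have hpos : (0 : ℝ≥0∞) < ENNReal.ofReal (Real.exp e) := ENNReal.ofReal_pos.2 (Real.exp_pos e)
  obtain ⟨F, hF⟩ := ((ENNReal.tendsto_tsum_compl_atTop_zero hs).eventually_lt_const hpos).exists
  refine ⟨F, fun c hc h => pressure_le_of_genFun_ne_top ?_⟩
  refine genFun_ne_top_of_classes F univ (fun a ha => ?_) (genFun_ne_top_of_small ?_)
  · by_cases hl : Chain A a a
    · refine genFun_commClass_ne_top_of_loop hθ hsum hLip (chain_iff_transGen.1 hl)
        ENNReal.ofReal_ne_top (genFun_ne_top_of_pressure_lt (fun n => ?_)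
          ((h a ha).resolve_left (not_not.2 hl)))
      exact ne_top_of_le_ne_top (pressureZ_ne_top hsum n) (pressureZ_restrictT_le _ n)
    · exact genFun_commClass_ne_top_of_no_loop hsum (fun h => hl (chain_iff_transGen.2 h))
        ENNReal.ofReal_ne_top
  · rw [ENNReal.tsum_mul_right]
    have h1 : ∑' s, {s ∈ univ | ∀ a ∈ F, s ∉ commClass A a}.indicator
        (fun s => wordWeight A f [s]) s < ENNReal.ofReal (Real.exp e) := by
      refine lt_of_le_of_lt ?_ hF
      have h2 := tsum_subtype {s | s ∉ F} fun s => wordWeight A f [s]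
      refine le_trans ?_ h2.symm.le
      refine ENNReal.tsum_le_tsum fun s => Set.indicator_le_indicator_of_subset ?_
        (fun _ => zero_le) s
      intro s hs hsF
      exact hs.2 s hsF (Or.inl rfl)
    calc _ ≤ _ * ENNReal.ofReal (Real.exp (-e)) :=
          mul_le_mul_right (ENNReal.ofReal_le_ofReal (Real.exp_le_exp.2 (by linarith))) _
      _ < ENNReal.ofReal (Real.exp e) * ENNReal.ofReal (Real.exp (-e)) :=
          ENNReal.mul_lt_mul_left (by simp [Real.exp_pos]) ENNReal.ofReal_ne_top h1
      _ = 1 := by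
          rw [← ENNReal.ofReal_mul (Real.exp_nonneg _), ← Real.exp_add]
          simp

end ClassBound

/-- For a summable weakly-Lipschitz potential on a countable-state TMS,
the pressure is the maximum of the pressures over the transitive components `X_{M(T)}`,
`T ∈ S/↔`, provided `X` has a periodic point; otherwise `P(φ) = -∞`. -/
theorem pressure_eq_max_over_classes
    {S : Type*} [Countable S] (A : S → S → Prop) (f : (ℕ → S) → ℝ)
    (θ : ℝ) (hθ : θ ∈ Set.Ioo (0 : ℝ) 1) (k : ℕ) (hk : 1 ≤ k)
    (hsum : SummablePot A f)
    (hLip : ∃ C : ℝ, ∀ n, k + 1 ≤ n → ∀ ω ∈ TMS A, ∀ υ ∈ TMS A,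
      (∀ i < n, ω i = υ i) → |f ω - f υ| ≤ C * θ ^ n) :
    ((∃ ω ∈ TMS A, ∃ m, 1 ≤ m ∧ shift^[m] ω = ω) →
      (∃ a : S, pressure A f = pressure (restrictT A (commClass A a)) f) ∧
        ∀ a : S, pressure (restrictT A (commClass A a)) f ≤ pressure A f) ∧
    ((¬ ∃ ω ∈ TMS A, ∃ m, 1 ≤ m ∧ shift^[m] ω = ω) → pressure A f = ⊥) := by
  obtain ⟨C, hC⟩ := hLip
  refine ⟨?_, fun hno => ?_⟩
  · rintro ⟨ω, hω, m, hm, hp⟩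
    refine ⟨?_, fun a => pressure_restrictT_le _⟩
    have hbot : pressure (restrictT A (commClass A (ω 0))) f ≠ ⊥ :=
      pressure_ne_bot_of_periodic
        (mem_TMS_restrictT.2 ⟨hω, periodic_mem_commClass hω hm hp⟩) hm hp
    have hlt : ⊥ < pressure A f :=
      (bot_lt_iff_ne_bot.2 hbot).trans_le (pressure_restrictT_le _)
    obtain ⟨e, -, he⟩ := EReal.lt_iff_exists_real_btwn.1 hlt
    obtain ⟨F, hF⟩ := exists_finset_pressure_le hθ hsum hC e
    by_contra hcon
    push Not at hcon
    have hall : ∀ a, pressure (restrictT A (commClass A a)) f < pressure A f := fun a =>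
      lt_of_le_of_ne (pressure_restrictT_le _) (hcon a).symm
    -- `e` and the pressures of the finitely many classes of letters in `F` are separated from `P(f)`
    -- by a real number `c`
    have hsup : (e : EReal) ⊔ F.sup (fun a => pressure (restrictT A (commClass A a)) f) <
        pressure A f :=
      max_lt he ((Finset.sup_lt_iff hlt).2 fun a _ => hall a)
    obtain ⟨c, hc1, hc2⟩ := EReal.lt_iff_exists_real_btwn.1 hsup
    rw [max_lt_iff] at hc1
    refine absurd (hF c (by exact_mod_cast hc1.1.le) fun a ha => Or.inr ?_) (not_le.2 hc2)
    exact (Finset.le_sup (f := fun a => pressure (restrictT A (commClass A a)) f) ha).trans_lt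
      hc1.2
  · refine EReal.eq_bot_iff_forall_lt _ |>.2 fun c => ?_
    obtain ⟨F, hF⟩ := exists_finset_pressure_le hθ hsum hC (c - 1)
    refine (hF (c - 1) le_rfl fun a _ => Or.inl fun h => hno (exists_periodic_of_loop h)).trans_lt
      ?_
    exact_mod_cast sub_one_lt c
end

section
/- Let S = {1,2,3,…} be a countably infinite state space and A : S×S → {0,1} an irreducible zero-one matrix. Then for every n ≥ 1 there exist a finite subset S_n ⊆ S with {1,2,…,n} ⊆ S_n and an irreducible zero-one matrix A_n indexed by S_n×S_n such that: A_n(i,j) = A(i,j) for all (i,j) ∈ {1,2,…,n}×S_n; S_n ⊆ S_{n+1}; and A_n(i,j) ≤ A_{n+1}(i,j) ≤ A(i,j) for all n ≥ 1 and all i,j ∈ S_n. -/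
/-!
Fix the base state `1`. For every state `s`, irreducibility provides a closed admissible word
`1 → ⋯ → s → ⋯ → 1`; let `C s` be the finite set of its letters. Every letter of the word is
joined to `1` in both directions by admissible words that stay inside `C s`
(`exists_finite_loop`). Take `S_n = ⋃_{s ≤ n} C s` and let `A_n` be the restriction of `A` to
`S_n`. It is irreducible, since any two states of `S_n` communicate through `1`; agreement with
`A` and monotonicity are immediate because every `A_n` is a restriction of `A`.
-/

open scoped ENNReal NNReal Topology
open Filter Set Metric

/-- The restriction of the relation `A` to the set `C`, as a relation on the whole space. -/
def Restr {S : Type*} (A : S → S → Prop) (C : Set S) (i j : S) : Prop :=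
  i ∈ C ∧ j ∈ C ∧ A i j

theorem Restr.mono {S : Type*} {A : S → S → Prop} {C D : Set S} (h : C ⊆ D) (i j : S)
    (hij : Restr A C i j) : Restr A D i j :=
  ⟨h hij.1, h hij.2.1, hij.2.2⟩

theorem chain_of_transGen {S : Type*} {R : S → S → Prop} {a b : S}
    (h : Relation.TransGen R a b) : Chain R a b := by
  induction h with
  | @single b hab =>
    refine ⟨1, fun i => if i = 0 then a else b, le_rfl, by simp, by simp, ?_⟩
    intro i hi
    obtain rfl : i = 0 := by omega
    simpa using hab
  | @tail b c _ hbc ih =>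
    obtain ⟨m, w, hm, h0, h1, hw⟩ := ih
    refine ⟨m + 1, fun i => if i ≤ m then w i else c, by omega, by simpa using h0, by simp, ?_⟩
    intro i hi
    rcases Nat.lt_or_ge i m with him | him
    · have h1 : i ≤ m := him.le
      have h2 : i + 1 ≤ m := him
      simpa only [h1, h2, if_true] using hw i him
    · obtain rfl : i = m := by omega
      simpa [h1] using hbc

/-- The letters of a word from `a` to `b` form a finite set in which every element is reachable
from `a` and reaches `b`, without leaving the set. -/
theorem exists_finite_path {S : Type*} {A : S → S → Prop} {a b : S} (h : Chain A a b) :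
    ∃ C : Set S, C.Finite ∧ a ∈ C ∧ b ∈ C ∧ Relation.TransGen (Restr A C) a b ∧
      ∀ x ∈ C, Relation.ReflTransGen (Restr A C) a x ∧ Relation.ReflTransGen (Restr A C) x b := by
  obtain ⟨m, w, hm, rfl, rfl, hw⟩ := h
  have step : ∀ i < m, Restr A (w '' Set.Iic m) (w i) (w (i + 1)) := fun i hi =>
    ⟨⟨i, hi.le, rfl⟩, ⟨i + 1, hi, rfl⟩, hw i hi⟩
  have key : ∀ i k, i + k ≤ m →
      Relation.ReflTransGen (Restr A (w '' Set.Iic m)) (w i) (w (i + k)) := by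
    intro i k
    induction k with
    | zero => exact fun _ => .refl
    | succ k ih => exact fun hk => (ih (by omega)).tail (step (i + k) (by omega))
  refine ⟨w '' Set.Iic m, (Set.finite_Iic m).image w, ⟨0, Nat.zero_le m, rfl⟩,
    ⟨m, Set.mem_Iic.2 le_rfl, rfl⟩, ?_, ?_⟩
  · have h1 := key 1 (m - 1) (by omega)
    rw [show 1 + (m - 1) = m by omega] at h1
    exact Relation.TransGen.head' (step 0 hm) h1
  · rintro _ ⟨i, hi, rfl⟩
    have hi : i ≤ m := hi
    have h0 := key 0 i (by omega)
    have h1 := key i (m - i) (by omega)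
    rw [Nat.zero_add] at h0
    rw [show i + (m - i) = m by omega] at h1
    exact ⟨h0, h1⟩

/-- The letters of a closed word through `r` and `s` form a finite set in which every element
communicates with `r`, without leaving the set. -/
theorem exists_finite_loop {S : Type*} {A : S → S → Prop} (hA : ∀ a b : S, Chain A a b)
    (r s : S) :
    ∃ C : Set S, C.Finite ∧ s ∈ C ∧
      ∀ x ∈ C, Relation.TransGen (Restr A C) r x ∧ Relation.TransGen (Restr A C) x r := by
  obtain ⟨C, hC, -, hsC, hrs, hxC⟩ := exists_finite_path (hA r s)
  obtain ⟨D, hD, -, -, hsr, hxD⟩ := exists_finite_path (hA s r)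
  have mC := Restr.mono (A := A) (Set.subset_union_left : C ⊆ C ∪ D)
  have mD := Restr.mono (A := A) (Set.subset_union_right : D ⊆ C ∪ D)
  have hrs := Relation.TransGen.mono mC _ _ hrs
  have hsr := Relation.TransGen.mono mD _ _ hsr
  refine ⟨C ∪ D, hC.union hD, Or.inl hsC, ?_⟩
  rintro x (hx | hx)
  · exact ⟨(hrs.trans hsr).trans_left (Relation.ReflTransGen.mono mC _ _ (hxC x hx).1),
      Relation.TransGen.trans_right (Relation.ReflTransGen.mono mC _ _ (hxC x hx).2) hsr⟩
  · exact ⟨hrs.trans_left (Relation.ReflTransGen.mono mD _ _ (hxD x hx).1),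
      Relation.TransGen.trans_right (Relation.ReflTransGen.mono mD _ _ (hxD x hx).2) (hrs.trans hsr)⟩

/-- An irreducible zero-one matrix `A` on the countable state space
`S = {1,2,3,…}` admits an increasing family of finite irreducible submatrices `A_n`
on finite subsets `S_n ⊇ {1,…,n}` that agree with `A` on `{1,…,n} × S_n`. -/
theorem exists_increasing_finite_irreducible_submatrices
    (A : ℕ+ → ℕ+ → Prop) (hA : ∀ a b : ℕ+, Chain A a b) :
    ∃ (Sn : ℕ → Set ℕ+) (B : ℕ → ℕ+ → ℕ+ → Prop),
      ∀ n, 1 ≤ n →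
        (Sn n).Finite ∧
        {i : ℕ+ | (i : ℕ) ≤ n} ⊆ Sn n ∧
        (∀ i j, B n i j → i ∈ Sn n ∧ j ∈ Sn n) ∧
        (∀ a ∈ Sn n, ∀ b ∈ Sn n, Chain (B n) a b) ∧
        (∀ i j : ℕ+, (i : ℕ) ≤ n → j ∈ Sn n → (B n i j ↔ A i j)) ∧
        Sn n ⊆ Sn (n + 1) ∧
        (∀ i ∈ Sn n, ∀ j ∈ Sn n, (B n i j → B (n + 1) i j) ∧ (B (n + 1) i j → A i j)) := by
  choose C hfin hmem hC using exists_finite_loop hA 1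
  have hsub : ∀ (n : ℕ) (s : ℕ+), (s : ℕ) ≤ n → C s ⊆ ⋃ s ∈ {i : ℕ+ | (i : ℕ) ≤ n}, C s :=
    fun n s hs => Set.subset_biUnion_of_mem (u := C) (show s ∈ {i : ℕ+ | (i : ℕ) ≤ n} from hs)
  have hSn : ∀ n : ℕ, (⋃ s ∈ {i : ℕ+ | (i : ℕ) ≤ n}, C s) ⊆
      ⋃ s ∈ {i : ℕ+ | (i : ℕ) ≤ n + 1}, C s := fun n =>
    Set.biUnion_subset_biUnion_left fun _ hs => Nat.le_succ_of_le hs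
  refine ⟨fun n => ⋃ s ∈ {i : ℕ+ | (i : ℕ) ≤ n}, C s,
    fun n => Restr A (⋃ s ∈ {i : ℕ+ | (i : ℕ) ≤ n}, C s), fun n _ => ⟨?_, ?_, ?_, ?_, ?_, hSn n, ?_⟩⟩
  · refine Set.Finite.biUnion ?_ fun s _ => hfin s
    exact (Set.finite_Iic n).preimage PNat.coe_injective.injOn
  · exact fun i hi => hsub n i hi (hmem i)
  · exact fun i j h => ⟨h.1, h.2.1⟩
  · intro a ha b hb
    obtain ⟨s, hs, has⟩ := Set.mem_iUnion₂.1 ha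
    obtain ⟨t, ht, hbt⟩ := Set.mem_iUnion₂.1 hb
    exact chain_of_transGen <| (Relation.TransGen.mono (Restr.mono (hsub n s hs)) _ _ (hC s a has).2).trans
      (Relation.TransGen.mono (Restr.mono (hsub n t ht)) _ _ (hC t b hbt).1)
  · exact fun i j hi hj => ⟨fun h => h.2.2, fun h => ⟨hsub n i hi (hmem i), hj, h⟩⟩
  · exact fun i _ j _ => ⟨Restr.mono (hSn n) i j, fun h => h.2.2⟩
end

section
/- Let X be a topological Markov shift with countable state space S and transition matrix A, and let φ : X → ℝ be a summable real-valued function with [φ]_{k+1} < ∞ for some fixed integer k ≥ 1. Then P(φ) = sup{ P(φ|X_M) : S₀ ⊆ S nonempty, M : S₀×S₀ → {0,1} with M(i,j) ≤ A(i,j) for all i,j ∈ S₀, and M irreducible }. -/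
/-!
Passing to a smaller transition matrix shrinks cylinders, so each subsystem has pressure at most
`P(f)`. For the other inequality let `t` be a real number above the supremum and `x = exp (-t)`.
Give a word `l` the weight `x ^ |l| * sup_{[l]} exp (S_{|l|} f)` (`lw`). The sum of all weights is
`∑ x ^ n * Z_n`, and it suffices to show that it is finite, since then `P(f) ≤ t`
(`pressure_le_of_tsum`).

Weights are submultiplicative under concatenation. Summability gives a finite set `F` of letters
such that the words avoiding `F` have finite total weight (`exists_finset_tail`). The letters of `F`
are then put back one at a time: cutting a word at the first and last occurrence of `a` shows that
allowing the letter `a` changes the total weight from `G` to at most `G + G * L * G`, where `L` is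
the total weight of the words beginning and ending with `a` (`tsum_insert_le`).

It remains to see that `L` is finite (`tsum_loops_ne_top`). Admissible words from `a` to `a` of
length at least two exist only if `a` lies on a closed path, and then they are words of the
irreducible subsystem on the states sharing a closed path with `a`. By bounded distortion the weight
of such a word is, up to a constant and the factor of its last `k` letters, at most the weight
computed inside the subsystem (`lw_loop_le`). The sum of the latter converges because the pressure of
the subsystem is less than `t` (`tsum_ne_top_of_pressure`). Working with the series at `x` instead of
the individual `Z_n` avoids any polynomial loss in the decomposition.
-/

open scoped ENNReal NNReal Topology
open Filter Set Metric

noncomputable section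

namespace PressureSup

variable {S : Type*}

/-! ### Weights of words -/

/-- The cylinder of a word given as a list; the list form makes concatenation convenient. -/
def lcyl (A : S → S → Prop) (l : List S) : Set (ℕ → S) :=
  {ω | ω ∈ TMS A ∧ ∀ i (h : i < l.length), ω i = l[i]}

/-- The weight `x ^ |l| * sup_{[l]} exp (S_{|l|} f)` of the word `l`; it is `0` if the cylinder is
empty. -/
def lw (A : S → S → Prop) (f : (ℕ → S) → ℝ) (x : ℝ≥0∞) (l : List S) : ℝ≥0∞ :=
  x ^ l.length * ⨆ ω ∈ lcyl A l, ENNReal.ofReal (Real.exp (birkhoff f l.length ω))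

lemma shift_iterate (n : ℕ) (ω : ℕ → S) : shift^[n] ω = fun i => ω (i + n) := by
  induction n generalizing ω with
  | zero => rfl
  | succ n ih =>
    rw [Function.iterate_succ_apply, ih]
    funext i
    simp [shift, add_assoc]

lemma shift_mem {A : S → S → Prop} {ω : ℕ → S} (h : ω ∈ TMS A) (n : ℕ) :
    shift^[n] ω ∈ TMS A := by
  rw [shift_iterate]
  intro i
  have := h (i + n)
  simpa [add_right_comm] using this

lemma birkhoff_add (f : (ℕ → S) → ℝ) (m n : ℕ) (ω : ℕ → S) :
    birkhoff f (m + n) ω = birkhoff f m ω + birkhoff f n (shift^[m] ω) := by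
  unfold birkhoff
  rw [Finset.sum_range_add]
  congr 1
  refine Finset.sum_congr rfl fun i _ => ?_
  rw [add_comm m i, Function.iterate_add_apply]

lemma lcyl_append {A : S → S → Prop} {u v : List S} {ω : ℕ → S} (h : ω ∈ lcyl A (u ++ v)) :
    ω ∈ lcyl A u ∧ shift^[u.length] ω ∈ lcyl A v := by
  refine ⟨⟨h.1, fun i hi => ?_⟩, shift_mem h.1 _, fun i hi => ?_⟩
  · rw [h.2 i (by simp; omega), List.getElem_append_left hi]
  · rw [shift_iterate]
    simp only
    rw [h.2 (i + u.length) (by simp; omega), List.getElem_append_right (by omega)]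
    simp

lemma lw_append_le (A : S → S → Prop) (f : (ℕ → S) → ℝ) (x : ℝ≥0∞) (u v : List S) :
    lw A f x (u ++ v) ≤ lw A f x u * lw A f x v := by
  unfold lw
  rw [List.length_append, pow_add, mul_mul_mul_comm]
  gcongr
  refine iSup₂_le fun ω hω => ?_
  obtain ⟨h1, h2⟩ := lcyl_append hω
  rw [birkhoff_add, Real.exp_add, ENNReal.ofReal_mul (Real.exp_pos _).le]
  exact mul_le_mul'
    (le_iSup₂ (f := fun ω _ => ENNReal.ofReal (Real.exp (birkhoff f u.length ω))) ω h1)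
    (le_iSup₂ (f := fun ω _ => ENNReal.ofReal (Real.exp (birkhoff f v.length ω))) _ h2)

lemma lw_nil_le (A : S → S → Prop) (f : (ℕ → S) → ℝ) (x : ℝ≥0∞) : lw A f x [] ≤ 1 := by
  simp [lw, birkhoff]

lemma lw_le_prod (A : S → S → Prop) (f : (ℕ → S) → ℝ) (x : ℝ≥0∞) (l : List S) :
    lw A f x l ≤ (l.map fun s => lw A f x [s]).prod := by
  induction l with
  | nil => simpa using lw_nil_le A f x
  | cons s l ih =>
    calc lw A f x (s :: l) = lw A f x ([s] ++ l) := rfl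
      _ ≤ lw A f x [s] * lw A f x l := lw_append_le ..
      _ ≤ _ := by rw [List.map_cons, List.prod_cons]; gcongr

lemma lcyl_nonempty_of_lw_ne {A : S → S → Prop} {f : (ℕ → S) → ℝ} {x : ℝ≥0∞} {l : List S}
    (h : lw A f x l ≠ 0) : (lcyl A l).Nonempty := by
  by_contra hne
  rw [Set.not_nonempty_iff_eq_empty] at hne
  exact h (by simp [lw, hne])

/-! ### Sums over all words -/

lemma tsum_list (F : List S → ℝ≥0∞) :
    ∑' l, F l = ∑' n, ∑' w : Fin n → S, F (List.ofFn w) := by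
  rw [← (List.equivSigmaTuple (α := S)).symm.tsum_eq, ENNReal.tsum_sigma']
  rfl

lemma tsum_fin_prod (g : S → ℝ≥0∞) (n : ℕ) :
    ∑' w : Fin n → S, ∏ i, g (w i) = (∑' s, g s) ^ n := by
  induction n with
  | zero => simp
  | succ n ih =>
    rw [← (Fin.consEquiv fun _ : Fin (n + 1) => S).tsum_eq, ENNReal.tsum_prod']
    simp [Fin.consEquiv, Fin.prod_univ_succ, ENNReal.tsum_mul_left, ENNReal.tsum_mul_right, ih,
      pow_succ']

lemma tsum_list_prod (c : ℕ → ℝ≥0∞) (g : S → ℝ≥0∞) :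
    ∑' l : List S, c l.length * (l.map g).prod = ∑' n, c n * (∑' s, g s) ^ n := by
  rw [tsum_list]
  refine tsum_congr fun n => ?_
  rw [← tsum_fin_prod, ← ENNReal.tsum_mul_left]
  simp [List.map_ofFn, List.prod_ofFn]

lemma tsum_lw (A : S → S → Prop) (f : (ℕ → S) → ℝ) (x : ℝ≥0∞) (n : ℕ) :
    ∑' w : Fin n → S, lw A f x (List.ofFn w) = x ^ n * pressureZ A f n := by
  unfold pressureZ
  rw [← ENNReal.tsum_mul_left]
  refine tsum_congr fun w => ?_
  have : lcyl A (List.ofFn w) = cylSet A n w := by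
    ext ω
    simp only [lcyl, cylSet, Set.mem_ofPred_eq, List.length_ofFn, List.getElem_ofFn]
    refine and_congr_right fun _ => ⟨fun h i => h i i.2, fun h i hi => h ⟨i, hi⟩⟩
  simp only [lw, this, List.length_ofFn]

lemma tsum_lw_list (A : S → S → Prop) (f : (ℕ → S) → ℝ) (x : ℝ≥0∞) :
    ∑' l, lw A f x l = ∑' n, x ^ n * pressureZ A f n := by
  rw [tsum_list]
  exact tsum_congr (tsum_lw A f x)

lemma tsum_lw_singleton (A : S → S → Prop) (f : (ℕ → S) → ℝ) (x : ℝ≥0∞) :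
    ∑' s, lw A f x [s] = x * pressureZ A f 1 := by
  have := tsum_lw A f x 1
  rw [← (Equiv.funUnique (Fin 1) S).symm.tsum_eq] at this
  simpa using this

lemma tsum_mul_tsum {α β : Type*} (F : α → ℝ≥0∞) (G : β → ℝ≥0∞) :
    (∑' a, F a) * ∑' b, G b = ∑' p : α × β, F p.1 * G p.2 := by
  rw [ENNReal.tsum_prod (f := fun a b => F a * G b), ← ENNReal.tsum_mul_right]
  simp only [ENNReal.tsum_mul_left]

/-- If every `l` in the support of `h` has a preimage `p` under `e` with `h l ≤ g p`, then the sum of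
`h` is at most that of `g`. -/
lemma tsum_le_of_cover {P L : Type*} (e : P → L) (h : L → ℝ≥0∞) (g : P → ℝ≥0∞)
    (H : ∀ l, h l ≠ 0 → ∃ p, e p = l ∧ h l ≤ g p) : ∑' l, h l ≤ ∑' p, g p := by
  rw [← (Equiv.sigmaFiberEquiv e).tsum_eq, ENNReal.tsum_sigma']
  refine ENNReal.tsum_le_tsum fun l => ?_
  by_cases h0 : h l = 0
  · simp [h0]
  obtain ⟨p, hp, hle⟩ := H l h0
  exact hle.trans (ENNReal.le_tsum (f := fun c : {p // e p = l} => g c.1) ⟨p, hp⟩)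

/-! ### Pressure and the generating series -/

lemma inv_mul_elog_le_iff {n : ℕ} (hn : 0 < n) (Z : ℝ≥0∞) (s : ℝ) :
    ((n : ℝ)⁻¹ : EReal) * elog Z ≤ s ↔ Z ≤ ENNReal.ofReal (Real.exp (n * s)) := by
  have hn' : (0 : ℝ) < n := by exact_mod_cast hn
  have hi : (0 : ℝ) < (n : ℝ)⁻¹ := inv_pos.2 hn'
  rw [← EReal.coe_inv]
  unfold elog
  split_ifs with h0 h1
  · simp [h0, EReal.coe_mul_bot_of_pos hi]
  · simp [h1, EReal.coe_mul_top_of_pos hi]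
  · rw [← EReal.coe_mul, EReal.coe_le_coe_iff, inv_mul_le_iff₀ hn',
      Real.log_le_iff_le_exp (ENNReal.toReal_pos h0 h1), ENNReal.le_ofReal_iff_toReal_le h1
        (Real.exp_pos _).le]

lemma pressure_le_of_tsum {A : S → S → Prop} {f : (ℕ → S) → ℝ} {t : ℝ}
    (h : ∑' l, lw A f (ENNReal.ofReal (Real.exp (-t))) l ≠ ⊤) : pressure A f ≤ t := by
  set x := ENNReal.ofReal (Real.exp (-t)) with hx
  rw [tsum_lw_list] at h
  obtain ⟨D, hD⟩ : ∃ D : ℝ≥0, (D : ℝ≥0∞) = _ := ⟨_, ENNReal.coe_toNNReal h⟩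
  refine (EReal.le_of_forall_lt_iff_le).1 fun s hs => ?_
  rw [EReal.coe_lt_coe_iff] at hs
  unfold pressure
  refine Filter.limsup_le_of_le (by isBoundedDefault) ?_
  have hlim : Tendsto (fun n : ℕ => Real.exp (n * (s - t))) atTop atTop :=
    Real.tendsto_exp_atTop.comp
      (tendsto_natCast_atTop_atTop.atTop_mul_const (sub_pos.2 hs))
  filter_upwards [hlim.eventually_ge_atTop (D : ℝ), eventually_gt_atTop 0] with n hn hn0
  rw [inv_mul_elog_le_iff hn0]
  have h1 : x ^ n * pressureZ A f n ≤ D := hD ▸ ENNReal.le_tsum n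
  have h2 : x ^ n = ENNReal.ofReal (Real.exp (-(n * t))) := by
    rw [hx, ← ENNReal.ofReal_pow (Real.exp_pos _).le, ← Real.exp_nat_mul]; ring_nf
  have h3 : ENNReal.ofReal (Real.exp (n * t)) * x ^ n = 1 := by
    rw [h2, ← ENNReal.ofReal_mul (Real.exp_pos _).le, ← Real.exp_add]; simp
  calc pressureZ A f n = ENNReal.ofReal (Real.exp (n * t)) * (x ^ n * pressureZ A f n) := by
        rw [← mul_assoc, h3, one_mul]
    _ ≤ ENNReal.ofReal (Real.exp (n * t)) * ENNReal.ofReal (Real.exp (n * (s - t))) := by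
        gcongr
        refine h1.trans ?_
        rw [← ENNReal.ofReal_coe_nnreal]
        exact ENNReal.ofReal_le_ofReal hn
    _ = _ := by
        rw [← ENNReal.ofReal_mul (Real.exp_pos _).le, ← Real.exp_add]; ring_nf

lemma pressureZ_ne_top {A : S → S → Prop} {f : (ℕ → S) → ℝ} (h : SummablePot A f) (n : ℕ) :
    pressureZ A f n ≠ ⊤ := by
  have h1 := tsum_lw A f 1 n
  rw [one_pow, one_mul] at h1
  have h2 : ∑' s, lw A f 1 [s] ≠ ⊤ := by rw [tsum_lw_singleton, one_mul]; exact h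
  rw [← h1]
  refine ne_top_of_le_ne_top (ENNReal.pow_ne_top (n := n) h2) ?_
  rw [← tsum_fin_prod]
  refine ENNReal.tsum_le_tsum fun w => (lw_le_prod A f 1 _).trans (le_of_eq ?_)
  simp [List.map_ofFn, List.prod_ofFn]

lemma tsum_ne_top_of_pressure {A : S → S → Prop} {f : (ℕ → S) → ℝ} {t : ℝ}
    (hs : SummablePot A f) (h : pressure A f < t) :
    ∑' l, lw A f (ENNReal.ofReal (Real.exp (-t))) l ≠ ⊤ := by
  obtain ⟨r, hr, hrt⟩ := EReal.lt_iff_exists_real_btwn.1 h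
  rw [EReal.coe_lt_coe_iff] at hrt
  have hev := Filter.eventually_lt_of_limsup_lt hr
  obtain ⟨N, hN⟩ := (hev.and (eventually_gt_atTop 0)).exists_forall_of_atTop
  rw [tsum_lw_list, ← ENNReal.summable.sum_add_tsum_nat_add' (f := fun n =>
    ENNReal.ofReal (Real.exp (-t)) ^ n * pressureZ A f n) (k := N)]
  refine ENNReal.add_ne_top.2 ⟨?_, ?_⟩
  · exact ENNReal.sum_ne_top.2 fun n _ =>
      ENNReal.mul_ne_top (ENNReal.pow_ne_top ENNReal.ofReal_ne_top) (pressureZ_ne_top hs n)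
  · set q : ℝ≥0∞ := ENNReal.ofReal (Real.exp (r - t)) with hq
    have hq1 : q < 1 := by
      rw [hq, ENNReal.ofReal_lt_one, Real.exp_lt_one_iff]; linarith
    have hgeom : ∑' n : ℕ, q ^ n ≠ ⊤ := by
      rw [ENNReal.tsum_geometric]
      exact ENNReal.inv_ne_top.2 (tsub_pos_of_lt hq1).ne'
    refine ne_top_of_le_ne_top hgeom
      (le_trans (ENNReal.tsum_le_tsum (g := fun n => q ^ (n + N)) fun n => ?_)
        (ENNReal.tsum_comp_le_tsum_of_injective (add_left_injective N) (fun n => q ^ n)))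
    obtain ⟨h1, h2⟩ := hN (n + N) (by omega)
    have h3 := (inv_mul_elog_le_iff h2 _ _).1 h1.le
    calc _ ≤ ENNReal.ofReal (Real.exp (-t)) ^ (n + N) *
          ENNReal.ofReal (Real.exp ((n + N : ℕ) * r)) := by gcongr
      _ = q ^ (n + N) := by
        rw [hq, ← ENNReal.ofReal_pow (Real.exp_pos _).le, ← ENNReal.ofReal_pow (Real.exp_pos _).le,
          ← ENNReal.ofReal_mul (by positivity), ← Real.exp_nat_mul, ← Real.exp_nat_mul,
          ← Real.exp_add]
        ring_nf

/-! ### Irreducible subsystems and closed paths -/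

lemma chain_iff {A : S → S → Prop} {a b : S} : Chain A a b ↔ Relation.TransGen A a b := by
  constructor
  · rintro ⟨m, w, hm, rfl, rfl, h⟩
    have : ∀ j, 1 ≤ j → j ≤ m → Relation.TransGen A (w 0) (w j) := by
      intro j hj
      induction j, hj using Nat.le_induction with
      | base => exact fun h1 => .single (h 0 (by omega))
      | succ j hj ih => exact fun h1 => (ih (by omega)).tail (h j (by omega))
    exact this m hm le_rfl
  · intro h
    induction h with
    | single h => exact ⟨1, fun i => if i = 0 then a else _, le_rfl, by simp, by simp; rfl,
        fun i hi => by obtain rfl : i = 0 := by omega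
                       simpa using h⟩
    | tail _ h ih =>
      rename_i d c _
      obtain ⟨m, w, hm, h0, hb, hw⟩ := ih
      refine ⟨m + 1, fun i => if i ≤ m then w i else c, by omega, by simpa using h0, by simp,
        fun i hi => ?_⟩
      rcases Nat.lt_succ_iff_lt_or_eq.1 hi with h1 | rfl
      · simpa [h1.le, Nat.succ_le_of_lt h1] using hw i h1
      · simpa [hb] using h

/-- The states lying on a common closed path with `a`. It is empty when `a` lies on no closed path,
and otherwise it is the communication class of `a`. -/
def recClass (A : S → S → Prop) (a : S) : Set S :=
  {b | Relation.TransGen A a b ∧ Relation.TransGen A b a}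

lemma restrict_irreducible (A : S → S → Prop) (a b c : S) (hb : b ∈ recClass A a)
    (hc : c ∈ recClass A a) : Relation.TransGen (restrictT A (recClass A a)) b c := by
  have h : Relation.TransGen A b c := hb.2.trans hc.1
  induction h using Relation.TransGen.head_induction_on with
  | single h => exact .single ⟨h, hb, hc⟩
  | head h h' ih =>
    have hd : _ ∈ recClass A a := ⟨hb.1.tail h, h'.trans hc.2⟩
    exact .head ⟨h, hb, hd⟩ (ih hd)

lemma transGen_of_TMS {A : S → S → Prop} {ω : ℕ → S} (h : ω ∈ TMS A) {i j : ℕ} (hij : i < j) :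
    Relation.TransGen A (ω i) (ω j) := by
  induction j, hij using Nat.le_induction with
  | base => exact .single (h i)
  | succ j hj ih => exact ih.tail (h j)

/-- A closed path at `a` stays in `recClass A a`, and repeating it gives a point of the irreducible
subsystem that agrees with `ω` along the path. -/
lemma exists_extension {A : S → S → Prop} {a : S} {ω : ℕ → S} {m : ℕ} (h : ω ∈ TMS A)
    (hm : 1 ≤ m) (h0 : ω 0 = a) (hma : ω m = a) :
    ∃ υ ∈ TMS (restrictT A (recClass A a)), ∀ i ≤ m, υ i = ω i := by
  have haa : a ∈ recClass A a := by
    have := transGen_of_TMS h (i := 0) (j := m) hm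
    rw [h0, hma] at this
    exact ⟨this, this⟩
  have hmem : ∀ i ≤ m, ω i ∈ recClass A a := by
    intro i hi
    rcases Nat.eq_zero_or_pos i with rfl | hi0
    · rwa [h0]
    rcases hi.eq_or_lt with rfl | him
    · rwa [hma]
    exact ⟨h0 ▸ transGen_of_TMS h hi0, by simpa only [hma] using transGen_of_TMS h him⟩
  -- The letters `ω 0, …, ω m` form a closed loop at `a`, repeated periodically.
  refine ⟨fun i => if i ≤ m then ω i else ω (i % m), fun i => ?_, fun i hi => by simp [hi]⟩
  have key : ∀ i, (if i ≤ m then ω i else ω (i % m)) = ω (i % m) := by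
    intro i
    split_ifs with hi
    · rcases hi.eq_or_lt with rfl | him
      · rw [Nat.mod_self, h0, hma]
      · rw [Nat.mod_eq_of_lt him]
    · rfl
  simp only [key]
  have hlt : i % m < m := Nat.mod_lt _ hm
  have hnext : ω ((i + 1) % m) = ω (i % m + 1) := by
    rw [Nat.add_mod_eq_ite]
    rcases hm.eq_or_lt with rfl | hm1
    · simp [Nat.mod_one, h0, hma]
    · rw [Nat.mod_eq_of_lt hm1]
      split_ifs with hc
      · have : i % m + 1 = m := by omega
        rw [this, Nat.sub_self, h0, hma]
      · rfl
  rw [hnext]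
  exact ⟨h _, hmem _ hlt.le, hmem _ hlt⟩

/-! ### Distortion -/

lemma sum_theta_le {θ : ℝ} (hθ : θ ∈ Set.Ioo (0 : ℝ) 1) {j m : ℕ} (hjm : j ≤ m) :
    ∑ i ∈ Finset.range j, θ ^ (m - i) ≤ (1 - θ)⁻¹ := by
  calc ∑ i ∈ Finset.range j, θ ^ (m - i) ≤ ∑ i ∈ Finset.range j, θ ^ (j - 1 - i) :=
        Finset.sum_le_sum fun i _ => pow_le_pow_of_le_one hθ.1.le hθ.2.le (by omega)
    _ = ∑ i ∈ Finset.range j, θ ^ i := Finset.sum_range_reflect (fun i => θ ^ i) j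
    _ ≤ ∑' i, θ ^ i := (summable_geometric_of_lt_one hθ.1.le hθ.2).sum_le_tsum _
        fun i _ => pow_nonneg hθ.1.le i
    _ = _ := tsum_geometric_of_lt_one hθ.1.le hθ.2

/-- Bounded distortion. On two points sharing `m` symbols the regularity of `f` controls the first
`m - k` terms of the Birkhoff sum; nothing is known about the remaining `k` terms. -/
lemma birkhoff_distortion {A : S → S → Prop} {f : (ℕ → S) → ℝ} {θ : ℝ}
    (hθ : θ ∈ Set.Ioo (0 : ℝ) 1) {k : ℕ} {C : ℝ}
    (hC : ∀ n, k + 1 ≤ n → ∀ ω ∈ TMS A, ∀ υ ∈ TMS A,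
      (∀ i < n, ω i = υ i) → |f ω - f υ| ≤ C * θ ^ n)
    {ω υ : ℕ → S} (hω : ω ∈ TMS A) (hυ : υ ∈ TMS A) {m : ℕ} (h : ∀ i < m, ω i = υ i) :
    birkhoff f (m - k) ω ≤ birkhoff f (m - k) υ + |C| * (1 - θ)⁻¹ := by
  have h1 : birkhoff f (m - k) ω - birkhoff f (m - k) υ ≤
      ∑ i ∈ Finset.range (m - k), |C| * θ ^ (m - i) := by
    unfold birkhoff
    rw [← Finset.sum_sub_distrib]
    refine Finset.sum_le_sum fun i hi => ?_
    rw [Finset.mem_range] at hi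
    refine (le_abs_self _).trans ((hC (m - i) (by omega) _ (shift_mem hω i) _ (shift_mem hυ i)
      fun j hj => ?_).trans ?_)
    · simp only [shift_iterate]
      exact h _ (by omega)
    · gcongr
      · exact pow_nonneg hθ.1.le _
      · exact le_abs_self C
  rw [← Finset.mul_sum] at h1
  have := mul_le_mul_of_nonneg_left (sum_theta_le hθ (Nat.sub_le m k)) (abs_nonneg C)
  linarith

/-! ### Decomposition of words at a letter -/

/-- Nonempty words whose first and last letters are both `a` (the one-letter word included). -/
def loops (a : S) : Set (List S) := {v | v.head? = some a ∧ v.getLast? = some a}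

/-- Words all of whose letters lie in `U`. -/
def wordsIn (U : Set S) : Set (List S) := {l | ∀ s ∈ l, s ∈ U}

/-- Cut a word at the first and at the last occurrence of `a`. -/
lemma loop_decomp {a : S} {l : List S} (h : a ∈ l) :
    ∃ u v u', l = u ++ (v ++ u') ∧ a ∉ u ∧ a ∉ u' ∧ v ∈ loops a := by
  obtain ⟨u, bs, rfl, hu⟩ := List.eq_append_cons_of_mem h
  obtain ⟨p, q, hpq, hp⟩ := List.eq_append_cons_of_mem
    (show a ∈ (a :: bs).reverse by simp)
  have h2 : a :: bs = (q.reverse ++ [a]) ++ p.reverse := by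
    rw [← List.reverse_reverse (a :: bs), hpq]; simp
  refine ⟨u, q.reverse ++ [a], p.reverse, by rw [h2], hu, by simpa using hp, ?_, by simp⟩
  have h3 := congrArg List.head? h2
  rw [List.head?_append_of_ne_nil _ (by simp)] at h3
  simpa using h3.symm

/-- Allowing one further letter `a` changes the generating series from `G` to at most
`G + G * L * G`, where `L` is the generating series of the loops at `a`. -/
lemma tsum_insert_le (A : S → S → Prop) (f : (ℕ → S) → ℝ) (x : ℝ≥0∞) (U : Set S) (a : S) :
    ∑' l, (wordsIn (insert a U)).indicator (lw A f x) l ≤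
      ∑' l, (wordsIn U).indicator (lw A f x) l +
      (∑' l, (wordsIn U).indicator (lw A f x) l) * ((∑' l, (loops a).indicator (lw A f x) l) *
        ∑' l, (wordsIn U).indicator (lw A f x) l) := by
  classical
  calc ∑' l, (wordsIn (insert a U)).indicator (lw A f x) l ≤
      ∑' l, ((wordsIn U).indicator (lw A f x) l +
        (wordsIn (insert a U) ∩ {l | a ∈ l}).indicator (lw A f x) l) := by
        refine ENNReal.tsum_le_tsum fun l => ?_
        by_cases hl : l ∈ wordsIn (insert a U)
        · by_cases ha : a ∈ l
          · rw [Set.indicator_of_mem hl,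
              Set.indicator_of_mem (s := wordsIn (insert a U) ∩ {l | a ∈ l}) ⟨hl, ha⟩]
            exact le_add_self
          · have : l ∈ wordsIn U := fun s hs => (hl s hs).resolve_left (by rintro rfl; exact ha hs)
            rw [Set.indicator_of_mem hl, Set.indicator_of_mem this]
            exact le_self_add
        · simp [hl]
    _ = ∑' l, (wordsIn U).indicator (lw A f x) l +
        ∑' l, (wordsIn (insert a U) ∩ {l | a ∈ l}).indicator (lw A f x) l := ENNReal.tsum_add
    _ ≤ _ := by
        gcongr
        rw [tsum_mul_tsum, tsum_mul_tsum]
        refine tsum_le_of_cover (fun p => p.1 ++ (p.2.1 ++ p.2.2)) _ _ fun l hl => ?_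
        have hmem := Set.mem_of_indicator_ne_zero hl
        obtain ⟨hin, ha⟩ := hmem
        obtain ⟨u, v, u', rfl, hu, hu', hv⟩ := loop_decomp ha
        refine ⟨(u, v, u'), rfl, ?_⟩
        have h1 : u ∈ wordsIn U := fun s hs =>
          (hin s (by simp [hs])).resolve_left (by rintro rfl; exact hu hs)
        have h2 : u' ∈ wordsIn U := fun s hs =>
          (hin s (by simp [hs])).resolve_left (by rintro rfl; exact hu' hs)
        simp only [Set.indicator_of_mem h1, Set.indicator_of_mem h2, Set.indicator_of_mem hv,
          Set.indicator_of_mem (s := wordsIn (insert a U) ∩ {l | a ∈ l}) ⟨hin, ha⟩]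
        exact (lw_append_le ..).trans (by gcongr; exact lw_append_le ..)

lemma mem_loops_getElem {a : S} {v : List S} (h : v ∈ loops a) :
    ∃ h0 : 0 < v.length, v[0] = a ∧ v[v.length - 1] = a := by
  obtain ⟨h1, h2⟩ := h
  have h0 : 0 < v.length := by
    rcases v with _ | ⟨b, v⟩
    · simp at h1
    · simp
  refine ⟨h0, ?_, ?_⟩
  · rw [List.head?_eq_getElem?, List.getElem?_eq_getElem h0] at h1
    simpa using h1
  · rw [List.getLast?_eq_getElem?, List.getElem?_eq_getElem (by omega)] at h2
    simpa using h2

/-! ### Convergence of the generating series -/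

/-- A loop at `a` is weighed in the full shift `A`, where suprema run over larger cylinders than in
the irreducible subsystem of `a`. The last `k` letters, on which there is no distortion bound, are
split off; the weight of the rest is comparable with its weight in the subsystem. -/
lemma lw_loop_le {A : S → S → Prop} {f : (ℕ → S) → ℝ} {θ : ℝ}
    (hθ : θ ∈ Set.Ioo (0 : ℝ) 1) {k : ℕ} {C : ℝ}
    (hC : ∀ n, k + 1 ≤ n → ∀ ω ∈ TMS A, ∀ υ ∈ TMS A,
      (∀ i < n, ω i = υ i) → |f ω - f υ| ≤ C * θ ^ n)
    (x : ℝ≥0∞) {a : S} {v : List S} (hv : v ∈ loops a) (h2 : 2 ≤ v.length) :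
    lw A f x v ≤ ENNReal.ofReal (Real.exp (|C| * (1 - θ)⁻¹)) *
      lw (restrictT A (recClass A a)) f x (v.take (v.length - k)) *
        lw A f x (v.drop (v.length - k)) := by
  obtain ⟨h0, hv0, hvl⟩ := mem_loops_getElem hv
  have hl1 : (v.take (v.length - k)).length = v.length - k := by simp
  have hl2 : v.length = (v.length - k) + (v.drop (v.length - k)).length := by simp
  unfold lw
  rw [hl1]
  set d := v.drop (v.length - k) with hd
  set n := v.length - k with hn
  set B := |C| * (1 - θ)⁻¹ with hB
  set s1 := ⨆ ω ∈ lcyl (restrictT A (recClass A a)) (v.take n),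
    ENNReal.ofReal (Real.exp (birkhoff f n ω)) with hs1
  set s2 := ⨆ ω ∈ lcyl A d, ENNReal.ofReal (Real.exp (birkhoff f d.length ω)) with hs2
  have main : ⨆ ω ∈ lcyl A v, ENNReal.ofReal (Real.exp (birkhoff f v.length ω)) ≤
      ENNReal.ofReal (Real.exp B) * s1 * s2 := by
    refine iSup₂_le fun ω hω => ?_
    have hω' : ω ∈ lcyl A (v.take n ++ d) := by rwa [hd, List.take_append_drop]
    have hωd := (lcyl_append hω').2
    rw [hl1] at hωd
    obtain ⟨υ, hυ, hag⟩ := exists_extension (m := v.length - 1) hω.1 (by omega)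
      ((hω.2 0 h0).trans hv0) ((hω.2 _ (by omega)).trans hvl)
    have hυA : υ ∈ TMS A := fun i => (hυ i).1
    have hdis := birkhoff_distortion hθ hC hω.1 hυA (m := v.length)
      fun i hi => (hag i (by omega)).symm
    have hυc : υ ∈ lcyl (restrictT A (recClass A a)) (v.take n) := by
      refine ⟨hυ, fun i hi => ?_⟩
      rw [hl1] at hi
      rw [hag i (by omega), hω.2 i (by omega), List.getElem_take]
    rw [hl2, birkhoff_add]
    calc ENNReal.ofReal (Real.exp (birkhoff f n ω + birkhoff f d.length (shift^[n] ω)))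
        ≤ ENNReal.ofReal (Real.exp (B + birkhoff f n υ + birkhoff f d.length (shift^[n] ω))) := by
          gcongr; linarith
      _ = ENNReal.ofReal (Real.exp B) * ENNReal.ofReal (Real.exp (birkhoff f n υ)) *
          ENNReal.ofReal (Real.exp (birkhoff f d.length (shift^[n] ω))) := by
          rw [Real.exp_add, Real.exp_add, ENNReal.ofReal_mul (by positivity),
            ENNReal.ofReal_mul (by positivity)]
      _ ≤ _ := by
          gcongr
          · exact le_iSup₂ (f := fun ω _ => ENNReal.ofReal (Real.exp (birkhoff f n ω))) υ hυc
          · exact le_iSup₂ (f := fun ω _ => ENNReal.ofReal (Real.exp (birkhoff f d.length ω)))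
              _ hωd
  calc x ^ v.length * _ ≤ x ^ v.length * (ENNReal.ofReal (Real.exp B) * s1 * s2) := by gcongr
    _ = _ := by
      conv_lhs => rw [hl2, pow_add]
      ring

lemma pressureZ_mono {A M : S → S → Prop} (h : ∀ i j, M i j → A i j) (f : (ℕ → S) → ℝ) (n : ℕ) :
    pressureZ M f n ≤ pressureZ A f n := by
  refine ENNReal.tsum_le_tsum fun w => iSup₂_le fun ω hω => ?_
  exact le_iSup₂ (f := fun ω _ => ENNReal.ofReal (Real.exp (birkhoff f n ω))) ω
    ⟨fun i => h _ _ (hω.1 i), hω.2⟩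

lemma pressure_mono {A M : S → S → Prop} (h : ∀ i j, M i j → A i j) (f : (ℕ → S) → ℝ) :
    pressure M f ≤ pressure A f := by
  unfold pressure
  refine Filter.limsup_le_limsup ?_
  filter_upwards [eventually_gt_atTop 0] with n hn
  refine EReal.le_of_forall_lt_iff_le.1 fun s hs => ?_
  exact (inv_mul_elog_le_iff hn _ _).2
    ((pressureZ_mono h f n).trans ((inv_mul_elog_le_iff hn _ _).1 hs.le))

/-- The generating series of loops at `a` converges at `exp (-t)` once `t` exceeds the pressure of
the irreducible subsystem of `a`, if there is one. -/
lemma tsum_loops_ne_top {A : S → S → Prop} {f : (ℕ → S) → ℝ} {θ : ℝ}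
    (hθ : θ ∈ Set.Ioo (0 : ℝ) 1) {k : ℕ} {C : ℝ}
    (hC : ∀ n, k + 1 ≤ n → ∀ ω ∈ TMS A, ∀ υ ∈ TMS A,
      (∀ i < n, ω i = υ i) → |f ω - f υ| ≤ C * θ ^ n)
    (hsum : SummablePot A f) {t : ℝ} {a : S}
    (ht : Relation.TransGen A a a → pressure (restrictT A (recClass A a)) f < t) :
    ∑' l, (loops a).indicator (lw A f (ENNReal.ofReal (Real.exp (-t)))) l ≠ ⊤ := by
  classical
  set x := ENNReal.ofReal (Real.exp (-t)) with hx
  have hg : ∑' s, lw A f x [s] ≠ ⊤ := by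
    rw [tsum_lw_singleton]; exact ENNReal.mul_ne_top ENNReal.ofReal_ne_top hsum
  have hsplit : ∀ l, (loops a).indicator (lw A f x) l ≤
      (if l = [a] then lw A f x [a] else 0) +
        (loops a ∩ {l | 2 ≤ l.length}).indicator (lw A f x) l := by
    intro l
    by_cases hl : l ∈ loops a
    · by_cases h2 : 2 ≤ l.length
      · rw [Set.indicator_of_mem hl, Set.indicator_of_mem (s := _ ∩ _) ⟨hl, h2⟩]
        exact le_add_self
      · have : l = [a] := by
          obtain ⟨h0, ha, -⟩ := mem_loops_getElem hl
          obtain ⟨b, rfl⟩ := List.length_eq_one_iff.1 (show l.length = 1 by omega)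
          simpa using ha
        rw [Set.indicator_of_mem hl, if_pos this, this]
        exact le_self_add
    · simp [hl]
  refine ne_top_of_le_ne_top ?_ (ENNReal.tsum_le_tsum hsplit)
  rw [ENNReal.tsum_add, tsum_ite_eq]
  refine ENNReal.add_ne_top.2 ⟨ne_top_of_le_ne_top hg (ENNReal.le_tsum a), ?_⟩
  -- If `a` lies on no closed path, then no loop of length at least two has positive weight.
  by_cases hloop : Relation.TransGen A a a
  · have hM : SummablePot (restrictT A (recClass A a)) f :=
      ne_top_of_le_ne_top hsum (pressureZ_mono (fun i j h => h.1) f 1)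
    have hG := tsum_ne_top_of_pressure hM (ht hloop)
    rw [← hx] at hG
    set K := ENNReal.ofReal (Real.exp (|C| * (1 - θ)⁻¹)) with hK
    -- The cut-off `c` restricts the second factor to words of length at most `k`.
    set c : ℕ → ℝ≥0∞ := fun n => if n ≤ k then 1 else 0 with hc
    have hT : ∑' l : List S, c l.length * (l.map fun s => lw A f x [s]).prod ≠ ⊤ := by
      rw [tsum_list_prod, tsum_eq_sum (s := Finset.range (k + 1))]
      · refine ENNReal.sum_ne_top.2 fun n _ => ENNReal.mul_ne_top ?_ (ENNReal.pow_ne_top hg)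
        simp only [hc]; split_ifs <;> simp
      · intro n hn
        have : ¬ n ≤ k := by simpa [Nat.lt_succ_iff] using hn
        simp [hc, this]
    refine ne_top_of_le_ne_top (ENNReal.mul_ne_top (ENNReal.mul_ne_top
      (ENNReal.ofReal_ne_top : K ≠ ⊤) hG) hT) ?_
    rw [mul_assoc, tsum_mul_tsum, ← ENNReal.tsum_mul_left]
    refine tsum_le_of_cover (fun p => p.1 ++ p.2) _ _ fun l hl => ?_
    have hmem := Set.mem_of_indicator_ne_zero hl
    rw [Set.indicator_of_mem hmem]
    refine ⟨(l.take (l.length - k), l.drop (l.length - k)), by simp, ?_⟩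
    refine (lw_loop_le hθ hC x hmem.1 hmem.2).trans ?_
    have : (l.drop (l.length - k)).length ≤ k := by simp; omega
    simp only [hc, this, if_true, one_mul]
    rw [mul_assoc]
    gcongr
    exact lw_le_prod ..
  · have : ∀ l, (loops a ∩ {l | 2 ≤ l.length}).indicator (lw A f x) l = 0 := by
      intro l
      by_contra hl
      obtain ⟨hm, h2⟩ := Set.mem_of_indicator_ne_zero hl
      rw [Set.indicator_of_mem (s := _ ∩ _) ⟨hm, h2⟩] at hl
      obtain ⟨ω, hω⟩ := lcyl_nonempty_of_lw_ne hl
      obtain ⟨h0, ha, hb⟩ := mem_loops_getElem hm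
      change 2 ≤ l.length at h2
      have := transGen_of_TMS hω.1 (i := 0) (j := l.length - 1) (by omega)
      rw [hω.2 0 h0, hω.2 _ (by omega), ha, hb] at this
      exact hloop this
    simp [this]

/-- By summability the letters outside some finite set have total weight less than `1`, so the
generating series of the words avoiding that set is dominated by a geometric series. -/
lemma exists_finset_tail {A : S → S → Prop} {f : (ℕ → S) → ℝ} {x : ℝ≥0∞}
    (hg : ∑' s, lw A f x [s] ≠ ⊤) :
    ∃ F : Finset S, ∑' l, (wordsIn (↑F : Set S)ᶜ).indicator (lw A f x) l ≠ ⊤ := by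
  classical
  obtain ⟨F, hF⟩ := ((ENNReal.tendsto_tsum_compl_atTop_zero hg).eventually
    (gt_mem_nhds one_pos)).exists
  refine ⟨F, ?_⟩
  set g : S → ℝ≥0∞ := (↑F : Set S)ᶜ.indicator fun s => lw A f x [s] with hgdef
  have hq : ∑' s, g s < 1 := by
    rw [hgdef, ← tsum_subtype]
    exact hF
  have hfin : ∑' n : ℕ, (∑' s, g s) ^ n ≠ ⊤ := by
    rw [ENNReal.tsum_geometric]
    exact ENNReal.inv_ne_top.2 (tsub_pos_of_lt hq).ne'
  refine ne_top_of_le_ne_top hfin ?_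
  have := tsum_list_prod (fun _ => 1) g
  simp only [one_mul] at this
  rw [← this]
  refine ENNReal.tsum_le_tsum fun l => ?_
  by_cases hl : l ∈ wordsIn (↑F : Set S)ᶜ
  · rw [Set.indicator_of_mem hl]
    refine (lw_le_prod A f x l).trans (le_of_eq ?_)
    congr 1
    exact List.map_congr_left fun s hs =>
      (Set.indicator_of_mem (hl s hs) fun s => lw A f x [s]).symm
  · simp [hl]

end PressureSup
end

/-- For a summable weakly-Lipschitz potential on a countable-state TMS,
the pressure equals the supremum of the pressures over all irreducible subsystems `X_M`,
where `M` ranges over zero-one matrices on nonempty subsets `S₀ ⊆ S` with `M ≤ A`. -/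
theorem pressure_eq_sup_over_irreducible_subsystems
    {S : Type*} [Countable S] (A : S → S → Prop) (f : (ℕ → S) → ℝ)
    (θ : ℝ) (hθ : θ ∈ Set.Ioo (0 : ℝ) 1) (k : ℕ) (hk : 1 ≤ k)
    (hsum : SummablePot A f)
    (hLip : ∃ C : ℝ, ∀ n, k + 1 ≤ n → ∀ ω ∈ TMS A, ∀ υ ∈ TMS A,
      (∀ i < n, ω i = υ i) → |f ω - f υ| ≤ C * θ ^ n) :
    pressure A f =
      sSup {p : EReal | ∃ (S₀ : Set S) (M : S → S → Prop),
        S₀.Nonempty ∧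
        (∀ i j, M i j → A i j) ∧
        (∀ i j, M i j → i ∈ S₀ ∧ j ∈ S₀) ∧
        (∀ a ∈ S₀, ∀ b ∈ S₀, Chain M a b) ∧
        p = pressure M f} := by

  classical
  obtain ⟨C, hC⟩ := hLip
  refine le_antisymm ?_ (sSup_le ?_)
  · refine EReal.le_of_forall_lt_iff_le.1 fun t ht => ?_
    refine PressureSup.pressure_le_of_tsum ?_
    set x := ENNReal.ofReal (Real.exp (-t)) with hx
    have hloops : ∀ a, ∑' l, (PressureSup.loops a).indicator (PressureSup.lw A f x) l ≠ ⊤ := by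
      intro a
      refine PressureSup.tsum_loops_ne_top hθ hC hsum fun haa => lt_of_le_of_lt (le_sSup ?_) ht
      exact ⟨PressureSup.recClass A a, _, ⟨a, haa, haa⟩, fun i j h => h.1, fun i j h => h.2,
        fun b hb c hc => PressureSup.chain_iff.2 (PressureSup.restrict_irreducible A a b c hb hc),
        rfl⟩
    have hg : ∑' s, PressureSup.lw A f x [s] ≠ ⊤ := by
      rw [PressureSup.tsum_lw_singleton]; exact ENNReal.mul_ne_top ENNReal.ofReal_ne_top hsum
    obtain ⟨F, hF⟩ := PressureSup.exists_finset_tail hg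
    -- The letters of `F` are put back one at a time.
    have hind : ∀ E : Finset S, ∑' l, (PressureSup.wordsIn (↑E ∪ (↑F : Set S)ᶜ)).indicator
        (PressureSup.lw A f x) l ≠ ⊤ := by
      intro E
      induction E using Finset.induction_on with
      | empty => simpa using hF
      | insert a E _ ih =>
        rw [Finset.coe_insert, Set.insert_union]
        exact ne_top_of_le_ne_top (ENNReal.add_ne_top.2
          ⟨ih, ENNReal.mul_ne_top ih (ENNReal.mul_ne_top (hloops a) ih)⟩)
          (PressureSup.tsum_insert_le A f x _ a)
    have hall := hind F
    rw [Set.union_compl_self] at hall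
    convert hall using 4 with l
    exact (Set.indicator_of_mem (s := PressureSup.wordsIn Set.univ)
      (fun s _ => Set.mem_univ s) _).symm
  · rintro p ⟨S₀, M, -, hMA, -, -, rfl⟩
    exact PressureSup.pressure_mono hMA f
end

section
/- Assume conditions (P.1) and (P.2). Then sup_{ω ∈ X^{V̂}} |π(ε,ω) − π(ω)| → 0 as ε → 0. -/
/-!
The perturbed coding point is compared with the unperturbed one along a finite prefix of `ω`.

Each map `T_{vu}` is an `r`-contraction only on balls inside `O_u`, which need not be convex. Points
of `J_u` have a fixed distance `c` to the complement of `O_u`, and points of `J_u(ε)` have distance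
at least `c - cpcd`, so short distances are contracted (`dist_T_le`). This gives two facts about
compositions along `n` unperturbed edges. Replacing `T(ε, ·)` by `T` moves points of `J(ε)` by at
most `Δ`, where `Δ` solves `r Δ + sup |T(ε, ·) - T| = Δ` (`dist_vcomp_perturbed_le`). And the
composition contracts distances below `c` to points of `J` by `r ^ n` (`dist_vcomp_le`).

The seed sets are connected and of uniformly bounded diameter, hence covered by a uniform number of
small balls. A map that shrinks distances below `c` by a factor `d` therefore has image of diameter
at most `N d` on every seed set, with `N` independent of the vertex (`exists_diam_image_bound`).

If the first `n` edges of `ω` are unperturbed, with `n` large, both facts and the diameter bound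
give the claim. Otherwise the first degenerate edge `ω_j ω_{j+1}` makes `π ω` equal to the image of
the constant `a_{ω_j}` under the first `j` maps. The perturbed map of that edge takes values close
to this constant, so the first fact is enough.
-/

open scoped ENNReal NNReal Topology
open Filter Set Metric

noncomputable section

/-- The ambient Euclidean space `ℝ^D`. -/
abbrev Pt (D : ℕ) := EuclideanSpace ℝ (Fin D)

/-- `‖A‖_i = ‖A⁻¹‖⁻¹` for an invertible continuous linear map (junk value otherwise). -/
def inorm {D : ℕ} (A : Pt D →L[ℝ] Pt D) : ℝ := ‖Ring.inverse A‖⁻¹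

/-- A simple graph-directed iterated function system (GIFS) in `ℝ^D` on the vertex set `V`,
with edge relation `E`, seed sets `J`, open sets `O` and contractions `T`. -/
structure SGIFS (D : ℕ) (V : Type*) where
  E : V → V → Prop
  J : V → Set (Pt D)
  O : V → Set (Pt D)
  T : V → V → Pt D → Pt D
  r : ℝ
  hr : r < 1
  J_cpt : ∀ v, IsCompact (J v)
  J_conn : ∀ v, IsConnected (J v)
  J_reg : ∀ v, J v = closure (interior (J v))
  J_diam : ∃ c : ℝ, ∀ v, Metric.diam (J v) ≤ c
  O_open : ∀ v, IsOpen (O v)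
  O_bdd : ∀ v, Bornology.IsBounded (O v)
  O_conn : ∀ v, IsConnected (O v)
  hJO : ∃ c > 0, ∀ v, ∀ x ∈ J v, ∀ y ∉ O v, c ≤ dist x y
  T_diff : ∀ ⦃v u⦄, E v u → ContDiffOn ℝ 1 (T v u) (O u)
  T_inj : ∀ ⦃v u⦄, E v u → Set.InjOn (T v u) (O u)
  T_openim : ∀ ⦃v u⦄, E v u → IsOpen (T v u '' O u)
  T_sub : ∀ ⦃v u⦄, E v u → T v u '' O u ⊆ O v
  T_J : ∀ ⦃v u⦄, E v u → T v u '' J u ⊆ J v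
  T_unit : ∀ ⦃v u⦄, E v u → ∀ x ∈ O u, IsUnit (fderiv ℝ (T v u) x)
  T_contr : ∀ ⦃v u⦄, E v u → ∀ x ∈ O u, ‖fderiv ℝ (T v u) x‖ ≤ r

/-- Composition `T_{ω₀ω₁} ∘ ⋯ ∘ T_{ω_{k-1}ω_k}` along a sequence (identity for `k = 0`). -/
def vcomp {D : ℕ} {V : Type*} (T : V → V → Pt D → Pt D) (ω : ℕ → V) : ℕ → Pt D → Pt D
  | 0 => id
  | k + 1 => vcomp T ω k ∘ T (ω k) (ω (k + 1))

/-- `π` is the coding map of the simple system `(Ed, J, T)`: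
`{π ω} = ⋂_{k ≥ 1} T_{ω₀ω₁} ∘ ⋯ ∘ T_{ω_{k-1}ω_k} (J_{ω_k})`. -/
def IsCodingMap {D : ℕ} {V : Type*} (Ed : V → V → Prop) (J : V → Set (Pt D))
    (T : V → V → Pt D → Pt D) (π : (ℕ → V) → Pt D) : Prop :=
  ∀ ω ∈ {ω : ℕ → V | ∀ n, Ed (ω n) (ω (n + 1))},
    (⋂ k : ℕ, vcomp T ω (k + 1) '' J (ω (k + 1))) = {π ω}

/-- `pcomp T w j m = T_{w_j w_{j+1}} ∘ ⋯ ∘ T_{w_{j+m-1} w_{j+m}}` (identity for `m = 0`). -/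
def pcomp {D : ℕ} {V : Type*} (T : V → V → Pt D → Pt D) (w : ℕ → V) : ℕ → ℕ → Pt D → Pt D
  | _, 0 => id
  | j, m + 1 => T (w j) (w (j + 1)) ∘ pcomp T w (j + 1) m

/-- The potential `φ(ω) = log ‖T'_{ω₀ω₁}(π(σω))‖`. -/
def phiU {D : ℕ} {V : Type*} (T : V → V → Pt D → Pt D) (π : (ℕ → V) → Pt D)
    (ω : ℕ → V) : ℝ :=
  Real.log ‖fderiv ℝ (T (ω 0) (ω 1)) (π (fun n => ω (n + 1)))‖

/-- The potential `φ̲(ω) = log ‖T'_{ω₀ω₁}(π(σω))‖_i`. -/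
def phiL {D : ℕ} {V : Type*} (T : V → V → Pt D → Pt D) (π : (ℕ → V) → Pt D)
    (ω : ℕ → V) : ℝ :=
  Real.log (inorm (fderiv ℝ (T (ω 0) (ω 1)) (π (fun n => ω (n + 1)))))

/-- Conformality condition `(G.5)_C`. -/
def CondConf {D : ℕ} {V : Type*} (Ed : V → V → Prop) (O : V → Set (Pt D))
    (T : V → V → Pt D → Pt D) : Prop :=
  ∀ ⦃v u⦄, Ed v u → ∀ x ∈ O u, IsConformalMap (fderiv ℝ (T v u) x)

/-- Strong separation condition `(G.6)_S` relative to a limit set `K`. -/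
def CondSSC {D : ℕ} {V : Type*} (Ed : V → V → Prop) (J : V → Set (Pt D))
    (T : V → V → Pt D → Pt D) (K : Set (Pt D)) : Prop :=
  ∀ ⦃v u v' u'⦄, Ed v u → Ed v' u' → (v, u) ≠ (v', u') →
    (T v u '' (J u ∩ K)) ∩ (T v' u' '' (J u' ∩ K)) = ∅

/-- Open set condition `(G.6)_O`. -/
def CondOSC {D : ℕ} {V : Type*} (Ed : V → V → Prop) (J : V → Set (Pt D))
    (T : V → V → Pt D → Pt D) : Prop :=
  ∀ ⦃v u v' u'⦄, Ed v u → Ed v' u' → (v, u) ≠ (v', u') →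
    (T v u '' interior (J u)) ∩ (T v' u' '' interior (J u')) = ∅

/-- Bounded distortion `(G.7)_B`. -/
def CondBD {D : ℕ} {V : Type*} (Ed : V → V → Prop) (O : V → Set (Pt D))
    (T : V → V → Pt D → Pt D) : Prop :=
  ∃ c > 0, ∃ β ∈ Set.Ioc (0 : ℝ) 1, ∀ ⦃v u⦄, Ed v u → ∀ x ∈ O u, ∀ y ∈ O u,
    |‖fderiv ℝ (T v u) x‖ - ‖fderiv ℝ (T v u) y‖| ≤
      c * ‖fderiv ℝ (T v u) x‖ * dist x y ^ β

/-- Bounded distortion for inverse maps `(G.7)_{BI}`. -/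
def CondBDI {D : ℕ} {V : Type*} (Ed : V → V → Prop) (O : V → Set (Pt D))
    (T : V → V → Pt D → Pt D) : Prop :=
  ∃ c > 0, ∃ β ∈ Set.Ioc (0 : ℝ) 1, ∀ ⦃v u⦄, Ed v u → ∀ x ∈ O u, ∀ y ∈ O u,
    |inorm (fderiv ℝ (T v u) x) - inorm (fderiv ℝ (T v u) y)| ≤
      c * inorm (fderiv ℝ (T v u) x) * dist x y ^ β

/-- Contractibility of the seed sets `(G.9)_J`. -/
def CondG9 {D : ℕ} {V : Type*} (Ed : V → V → Prop) (J : V → Set (Pt D))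
    (T : V → V → Pt D → Pt D) : Prop :=
  ∃ c > 0, ∀ v, Metric.diam (J v) ≤
    c * sSup {t : ℝ | ∃ u, Ed v u ∧ ∃ z ∈ J u, t = ‖fderiv ℝ (T v u) z‖}

/-- The summability interval `Ī^V` relative to the limit set `K`. -/
def IbarSet {D : ℕ} {V : Type*} (Ed : V → V → Prop) (J : V → Set (Pt D))
    (T : V → V → Pt D → Pt D) (K : Set (Pt D)) : Set ℝ :=
  {s | 0 ≤ s ∧
    (∑' v : V, ⨆ (u : V) (_ : Ed v u) (x : Pt D) (_ : x ∈ K ∩ J u),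
      ENNReal.ofReal (inorm (fderiv ℝ (T v u) x) ^ s)) ≠ ⊤}

end

noncomputable section

/-- Summability condition `(G.8)_{SV}`: some `s ∈ Ī^V` satisfies `P(s φ̲) = 0`. -/
def CondG8 {D : ℕ} {V : Type*} (Ed : V → V → Prop) (J : V → Set (Pt D))
    (T : V → V → Pt D → Pt D) (π : (ℕ → V) → Pt D) : Prop :=
  ∃ s ∈ IbarSet Ed J T (π '' TMS Ed), pressure Ed (fun ω => s * phiL T π ω) = 0

/-- A set of vertices is strongly connected (with edges restricted to it). -/
def SCOn {V : Type*} (Ed : V → V → Prop) (C : Set V) : Prop :=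
  ∀ v ∈ C, ∀ u ∈ C, Chain (restrictT Ed C) v u

/-- A strongly connected component: a maximal strongly connected set of vertices. -/
def IsSCC {V : Type*} (Ed : V → V → Prop) (C : Set V) : Prop :=
  SCOn Ed C ∧ ∀ C', C ⊆ C' → SCOn Ed C' → C' = C

end

noncomputable section

/-- A perturbed GIFS with degeneration: an unperturbed simple GIFS on `(V₀, E₀)`
(condition (P.1)) together with a family of perturbed simple GIFS on `(V̂ = V, Ê)`
for `ε ∈ (0,1)` satisfying condition (P.2). -/
structure PertGIFS (D : ℕ) (V : Type*) where
  /-- vertex set of the unperturbed graph -/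
  V₀ : Set V
  /-- edge relation of the unperturbed graph -/
  E₀ : V → V → Prop
  /-- edge relation of the perturbed graph `Ĝ` -/
  EE : V → V → Prop
  /-- unperturbed seed sets (for `v ∈ V̂ ∖ V` these are the sets from (P.2)(ii)) -/
  J : V → Set (Pt D)
  O : V → Set (Pt D)
  /-- unperturbed maps; on `Ê ∖ E` equal to the constants `a v` -/
  T : V → V → Pt D → Pt D
  a : V → Pt D
  Jε : ℝ → V → Set (Pt D)
  Oε : ℝ → V → Set (Pt D)
  Tε : ℝ → V → V → Pt D → Pt D
  r : ℝ
  r₁ : ℝ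
  cpcd : ℝ
  β : ℝ
  c'' : ℝ
  hE₀E : ∀ ⦃v u⦄, E₀ v u → EE v u
  hE₀V : ∀ ⦃v u⦄, E₀ v u → v ∈ V₀ ∧ u ∈ V₀
  -- (P.1): the unperturbed system is a simple GIFS on (V₀, E₀)
  hr : r < 1
  J_cpt : ∀ v, IsCompact (J v)
  J_conn : ∀ v, IsConnected (J v)
  J_reg : ∀ v ∈ V₀, J v = closure (interior (J v))
  J_diam : ∃ c : ℝ, ∀ v, Metric.diam (J v) ≤ c
  O_open : ∀ v ∈ V₀, IsOpen (O v)
  O_bdd : ∀ v ∈ V₀, Bornology.IsBounded (O v)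
  O_conn : ∀ v ∈ V₀, IsConnected (O v)
  hcpcd : 0 < cpcd
  hJO : ∃ c > 0, (∀ v ∈ V₀, ∀ x ∈ J v, ∀ y ∉ O v, c ≤ dist x y) ∧ cpcd < c
  T_diff : ∀ ⦃v u⦄, E₀ v u → ContDiffOn ℝ 1 (T v u) (O u)
  T_inj : ∀ ⦃v u⦄, E₀ v u → Set.InjOn (T v u) (O u)
  T_openim : ∀ ⦃v u⦄, E₀ v u → IsOpen (T v u '' O u)
  T_sub : ∀ ⦃v u⦄, E₀ v u → T v u '' O u ⊆ O v
  T_J : ∀ ⦃v u⦄, E₀ v u → T v u '' J u ⊆ J v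
  T_unit : ∀ ⦃v u⦄, E₀ v u → ∀ x ∈ O u, IsUnit (fderiv ℝ (T v u) x)
  T_contr : ∀ ⦃v u⦄, E₀ v u → ∀ x ∈ O u, ‖fderiv ℝ (T v u) x‖ ≤ r
  /-- `G` has at least one strongly connected component -/
  hSCC : ∃ C : Set V, C.Nonempty ∧ SCOn E₀ C
  /-- the degenerate maps are the constants `a v` -/
  hTconst : ∀ ⦃v u⦄, EE v u → ¬ E₀ v u → ∀ x, T v u x = a v
  ha : ∀ v, v ∉ V₀ → a v ∈ J v
  -- (P.2): the perturbed systems are simple GIFS on (V, Ê) for each ε ∈ (0,1)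
  pJ_cpt : ∀ ε ∈ Set.Ioo (0 : ℝ) 1, ∀ v, IsCompact (Jε ε v)
  pJ_conn : ∀ ε ∈ Set.Ioo (0 : ℝ) 1, ∀ v, IsConnected (Jε ε v)
  pJ_reg : ∀ ε ∈ Set.Ioo (0 : ℝ) 1, ∀ v, Jε ε v = closure (interior (Jε ε v))
  pJ_diam : ∀ ε ∈ Set.Ioo (0 : ℝ) 1, ∃ c : ℝ, ∀ v, Metric.diam (Jε ε v) ≤ c
  pO_open : ∀ ε ∈ Set.Ioo (0 : ℝ) 1, ∀ v, IsOpen (Oε ε v)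
  pO_bdd : ∀ ε ∈ Set.Ioo (0 : ℝ) 1, ∀ v, Bornology.IsBounded (Oε ε v)
  pO_conn : ∀ ε ∈ Set.Ioo (0 : ℝ) 1, ∀ v, IsConnected (Oε ε v)
  pJO : ∀ ε ∈ Set.Ioo (0 : ℝ) 1, ∃ c > 0, ∀ v, ∀ x ∈ Jε ε v, ∀ y ∉ Oε ε v, c ≤ dist x y
  pT_diff : ∀ ε ∈ Set.Ioo (0 : ℝ) 1, ∀ ⦃v u⦄, EE v u → ContDiffOn ℝ 1 (Tε ε v u) (Oε ε u)
  pT_inj : ∀ ε ∈ Set.Ioo (0 : ℝ) 1, ∀ ⦃v u⦄, EE v u → Set.InjOn (Tε ε v u) (Oε ε u)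
  pT_openim : ∀ ε ∈ Set.Ioo (0 : ℝ) 1, ∀ ⦃v u⦄, EE v u → IsOpen (Tε ε v u '' Oε ε u)
  pT_sub : ∀ ε ∈ Set.Ioo (0 : ℝ) 1, ∀ ⦃v u⦄, EE v u → Tε ε v u '' Oε ε u ⊆ Oε ε v
  pT_J : ∀ ε ∈ Set.Ioo (0 : ℝ) 1, ∀ ⦃v u⦄, EE v u → Tε ε v u '' Jε ε u ⊆ Jε ε v
  pT_unit : ∀ ε ∈ Set.Ioo (0 : ℝ) 1, ∀ ⦃v u⦄, EE v u → ∀ x ∈ Oε ε u,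
    IsUnit (fderiv ℝ (Tε ε v u) x)
  pT_contr : ∀ ε ∈ Set.Ioo (0 : ℝ) 1, ∃ ρ < 1, ∀ ⦃v u⦄, EE v u → ∀ x ∈ Oε ε u,
    ‖fderiv ℝ (Tε ε v u) x‖ ≤ ρ
  -- (P.2)(i)
  p_i : ∃ ε₀ > 0, ∃ c > 0, ∀ ε ∈ Set.Ioo (0 : ℝ) 1, ε < ε₀ →
    ∀ v, ∀ x ∈ Jε ε v, ∀ y ∉ Oε ε v, c ≤ dist x y
  -- (P.2)(ii)
  p_ii : ∃ ε₀ > 0, ∀ ε ∈ Set.Ioo (0 : ℝ) 1, ε < ε₀ →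
    ∀ v, Jε ε v ⊆ Metric.thickening cpcd (J v)
  -- (P.2)(iii): uniform convergence of the maps
  p_iii : ∀ δ > 0, ∃ ε₀ > 0, ∀ ε ∈ Set.Ioo (0 : ℝ) 1, ε < ε₀ →
    ∀ ⦃v u⦄, EE v u → ∀ x ∈ Jε ε u, dist (Tε ε v u x) (T v u x) ≤ δ
  -- (P.2)(iv): convergence of the derivatives, for each initial vertex
  p_iv : ∀ v, ∀ δ > 0, ∃ ε₀ > 0, ∀ ε ∈ Set.Ioo (0 : ℝ) 1, ε < ε₀ →
    ∀ ⦃u : V⦄, EE v u → ∀ x ∈ Jε ε u,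
      ‖fderiv ℝ (Tε ε v u) x - fderiv ℝ (T v u) x‖ ≤ δ
  -- (P.2)(v)
  hr₁ : r₁ < 1
  hr₁pos : 0 < r₁
  p_v : ∃ ε₀ > 0, ∀ ε ∈ Set.Ioo (0 : ℝ) 1, ε < ε₀ →
    ∀ ⦃v u⦄, EE v u → ∀ x ∈ Jε ε u, ‖fderiv ℝ (Tε ε v u) x‖ ≤ r₁
  -- (P.2)(vi)
  hβ : β ∈ Set.Ioc (0 : ℝ) 1
  hc'' : 0 < c''
  p_vi : ∀ ε ∈ Set.Ioo (0 : ℝ) 1, ∀ ⦃v u⦄, EE v u → ∀ x ∈ Oε ε u, ∀ y ∈ Oε ε u,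
    |‖fderiv ℝ (Tε ε v u) x‖ - ‖fderiv ℝ (Tε ε v u) y‖| ≤
      c'' * ‖fderiv ℝ (Tε ε v u) x‖ * dist x y ^ β

/-- The perturbed potential `φ(ε,ω) = log ‖T'_{ω₀ω₁}(ε, π(ε,σω))‖`. -/
def phiEps {D : ℕ} {V : Type*} (P : PertGIFS D V) (πε : ℝ → (ℕ → V) → Pt D)
    (ε : ℝ) (ω : ℕ → V) : ℝ :=
  Real.log ‖fderiv ℝ (P.Tε ε (ω 0) (ω 1)) (πε ε (fun n => ω (n + 1)))‖

/-- The summability interval `I_P^{V̂}` of the perturbation. -/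
def IPSet {D : ℕ} {V : Type*} (P : PertGIFS D V) : Set ℝ :=
  {s | 0 ≤ s ∧ ∃ ε₀ > 0,
    (∑' v : V, ⨆ (ε : ℝ) (_ : ε ∈ Set.Ioo 0 ε₀) (u : V) (_ : P.EE v u)
        (x : Pt D) (_ : x ∈ P.Jε ε u),
        ENNReal.ofReal (‖fderiv ℝ (P.Tε ε v u) x‖ ^ s)) ≠ ⊤}

/-- The summability interval `Ī_P^{V̂}` of the perturbation (with `‖·‖_i`). -/
def IPSetLow {D : ℕ} {V : Type*} (P : PertGIFS D V) : Set ℝ :=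
  {s | 0 ≤ s ∧ ∃ ε₀ > 0,
    (∑' v : V, ⨆ (ε : ℝ) (_ : ε ∈ Set.Ioo 0 ε₀) (u : V) (_ : P.EE v u)
        (x : Pt D) (_ : x ∈ P.Jε ε u),
        ENNReal.ofReal (inorm (fderiv ℝ (P.Tε ε v u) x) ^ s)) ≠ ⊤}

open Classical in
/-- The metric `d_θ` on sequences. -/
def dseq {S : Type*} (θ : ℝ) (ω υ : ℕ → S) : ℝ :=
  if ω = υ then 0 else θ ^ sInf {n : ℕ | ω n ≠ υ n}

end

/-! ### Contraction along unperturbed edges -/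

/-- The mean value inequality on a ball inside `O u`; the set `O u` itself need not be convex. -/
lemma dist_T_le {D : ℕ} {V : Type*} (P : PertGIFS D V) {v u : V} (h : P.E₀ v u)
    {z x : Pt D} {ρ : ℝ} (hball : ball z ρ ⊆ P.O u) (hx : dist x z < ρ) :
    dist (P.T v u x) (P.T v u z) ≤ max P.r 0 * dist x z := by
  have hu := (P.hE₀V h).2
  have hρ : 0 < ρ := lt_of_le_of_lt dist_nonneg hx
  rw [dist_eq_norm, dist_eq_norm]
  refine Convex.norm_image_sub_le_of_norm_fderiv_le (𝕜 := ℝ) (s := ball z ρ) ?_ ?_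
    (convex_ball z ρ) (mem_ball_self hρ) hx
  · intro y hy
    exact ((P.T_diff h).differentiableOn one_ne_zero).differentiableAt
      ((P.O_open u hu).mem_nhds (hball hy))
  · intro y hy
    exact (P.T_contr h y (hball hy)).trans (le_max_left _ _)

lemma ball_subset_O {D : ℕ} {V : Type*} (P : PertGIFS D V) {c : ℝ}
    (hc : ∀ v ∈ P.V₀, ∀ x ∈ P.J v, ∀ y ∉ P.O v, c ≤ dist x y)
    {u : V} (hu : u ∈ P.V₀) {z : Pt D} (hz : z ∈ P.J u) : ball z c ⊆ P.O u := by
  intro y hy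
  by_contra hyO
  have := hc u hu z hz y hyO
  rw [mem_ball, dist_comm] at hy
  linarith

/-- Compositions along `n` unperturbed edges contract distances below `c` to points of the
seed set by the factor `r ^ n`. -/
lemma dist_vcomp_le {D : ℕ} {V : Type*} (P : PertGIFS D V) {c : ℝ}
    (hc : ∀ v ∈ P.V₀, ∀ x ∈ P.J v, ∀ y ∉ P.O v, c ≤ dist x y) (ω : ℕ → V) (n : ℕ) :
    (∀ i < n, P.E₀ (ω i) (ω (i + 1))) → ∀ z ∈ P.J (ω n), ∀ x, dist x z < c →
      dist (vcomp P.T ω n x) (vcomp P.T ω n z) ≤ max P.r 0 ^ n * dist x z := by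
  induction n with
  | zero => intro _ z _ x _; simp [vcomp]
  | succ n ih =>
    intro hE z hz x hx
    have he := hE n (Nat.lt_succ_self n)
    have h1 := dist_T_le P he (ball_subset_O P hc (P.hE₀V he).2 hz) hx
    have hlt : max P.r 0 * dist x z ≤ dist x z :=
      mul_le_of_le_one_left dist_nonneg (max_le P.hr.le zero_le_one)
    have h2 := ih (fun i hi => hE i (Nat.lt_succ_of_lt hi)) _
      (P.T_J he (mem_image_of_mem _ hz)) (P.T (ω n) (ω (n + 1)) x) (by linarith)
    have h3 := mul_le_mul_of_nonneg_left h1 (pow_nonneg (le_max_right P.r 0) n)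
    calc dist (vcomp P.T ω (n + 1) x) (vcomp P.T ω (n + 1) z)
        ≤ max P.r 0 ^ n * (max P.r 0 * dist x z) := h2.trans h3
      _ = max P.r 0 ^ (n + 1) * dist x z := by ring

/-- Accumulated error of replacing the perturbed maps by the unperturbed ones. The bound `Δ` is
the fixed point of `t ↦ r t + Δ (1 - r)`, where `Δ (1 - r)` bounds the error of a single step, so
it does not grow with `n`. -/
lemma dist_vcomp_perturbed_le {D : ℕ} {V : Type*} (P : PertGIFS D V) {c Δ ε : ℝ}
    (hc : ∀ v ∈ P.V₀, ∀ x ∈ P.J v, ∀ y ∉ P.O v, c ≤ dist x y)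
    (hε : ε ∈ Set.Ioo (0 : ℝ) 1) (hΔ : Δ < c - P.cpcd)
    (hthick : ∀ v, P.Jε ε v ⊆ Metric.thickening P.cpcd (P.J v))
    (hclose : ∀ ⦃v u⦄, P.EE v u → ∀ x ∈ P.Jε ε u,
      dist (P.Tε ε v u x) (P.T v u x) ≤ Δ * (1 - max P.r 0))
    (ω : ℕ → V) (n : ℕ) :
    (∀ i < n, P.E₀ (ω i) (ω (i + 1))) → ∀ z ∈ P.Jε ε (ω n), ∀ q, dist q z ≤ Δ →
      dist (vcomp P.T ω n q) (vcomp (P.Tε ε) ω n z) ≤ Δ := by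
  induction n with
  | zero => intro _ z _ q hq; simpa [vcomp] using hq
  | succ n ih =>
    intro hE z hz q hq
    have he := hE n (Nat.lt_succ_self n)
    have hball : ball z (c - P.cpcd) ⊆ P.O (ω (n + 1)) := by
      obtain ⟨p, hp, hzp⟩ := Metric.mem_thickening_iff.1 (hthick _ hz)
      intro y hy
      apply ball_subset_O P hc (P.hE₀V he).2 hp
      rw [mem_ball] at hy ⊢
      linarith [dist_triangle y z p]
    have h1 := dist_T_le P he hball (hq.trans_lt hΔ)
    have h2 := hclose (P.hE₀E he) z hz
    rw [dist_comm] at h2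
    have h3 : max P.r 0 * dist q z ≤ max P.r 0 * Δ :=
      mul_le_mul_of_nonneg_left hq (le_max_right _ _)
    have h4 := dist_triangle (P.T (ω n) (ω (n + 1)) q) (P.T (ω n) (ω (n + 1)) z)
      (P.Tε ε (ω n) (ω (n + 1)) z)
    exact ih (fun i hi => hE i (Nat.lt_succ_of_lt hi)) _
      (P.pT_J ε hε (P.hE₀E he) (mem_image_of_mem _ hz)) (P.T (ω n) (ω (n + 1)) q) (by linarith)

/-! ### Images of connected sets of bounded diameter -/

/-- A map contracting distances below `c` by `d` sends a connected set of diameter at most `K` to a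
set of diameter at most `N * d`, where `N` depends only on `c`, `K` and the dimension. The real
function `p ↦ dist (f p) (f x)` takes all values between `0` and `dist (f y) (f x)` on `J`, while
`J` is a union of boundedly many pieces on each of which this function varies by at most
`d * c`; comparing Lebesgue measures gives the bound. -/
lemma exists_diam_image_bound (D : ℕ) (K : ℝ) {c : ℝ} (hc : 0 < c) :
    ∃ N : ℝ, 0 ≤ N ∧ ∀ J : Set (Pt D), IsPreconnected J → (∀ x ∈ J, ∀ y ∈ J, dist x y ≤ K) →
      ∀ (f : Pt D → Pt D) (d : ℝ), 0 ≤ d →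
        (∀ x ∈ J, ∀ y ∈ J, dist x y < c → dist (f x) (f y) ≤ d * dist x y) →
        ∀ x ∈ J, ∀ y ∈ J, dist (f x) (f y) ≤ N * d := by
  obtain ⟨t, htfin, ht⟩ := Metric.totallyBounded_iff.1
    (isCompact_closedBall (0 : Pt D) K).totallyBounded (c / 2) (half_pos hc)
  lift t to Finset (Pt D) using htfin
  refine ⟨t.card * c, by positivity, ?_⟩
  intro J hJ hdiam f d hd hf x hx y hy
  set g : Pt D → ℝ := fun p => dist (f p) (f x) with hg
  have hcont : ContinuousOn f J := by
    rw [Metric.continuousOn_iff]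
    intro b hb e he
    refine ⟨min c (e / (d + 1)), by positivity, fun a ha hab => ?_⟩
    have h1 := hf a ha b hb (hab.trans_le (min_le_left _ _))
    have h2 : dist a b < e / (d + 1) := hab.trans_le (min_le_right _ _)
    rw [lt_div_iff₀ (by positivity)] at h2
    nlinarith [dist_nonneg (x := a) (y := b)]
  have hgc : ContinuousOn g J := continuous_dist.comp_continuousOn (hcont.prodMk continuousOn_const)
  have hsub : Icc 0 (g y) ⊆ g '' J := by
    have := hJ.intermediate_value hx hy hgc
    simpa [hg] using this
  have hcov : g '' J ⊆ ⋃ p ∈ t, g '' (J ∩ ball (x + p) (c / 2)) := by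
    rintro _ ⟨q, hq, rfl⟩
    have : q - x ∈ closedBall (0 : Pt D) K := by
      rw [mem_closedBall, dist_zero_right, ← dist_eq_norm]
      exact hdiam q hq x hx
    have := ht this
    simp only [mem_iUnion] at this
    obtain ⟨p, hp, hqp⟩ := this
    simp only [mem_iUnion]
    refine ⟨p, hp, mem_image_of_mem _ ⟨hq, ?_⟩⟩
    rw [mem_ball, dist_eq_norm] at hqp ⊢
    rwa [← sub_sub]
  have hpiece : ∀ p ∈ t, MeasureTheory.volume (g '' (J ∩ ball (x + p) (c / 2)))
      ≤ ENNReal.ofReal (d * c) := by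
    intro p _
    refine (Real.volume_le_diam _).trans (Metric.ediam_le ?_)
    rintro _ ⟨a, ⟨haJ, ha⟩, rfl⟩ _ ⟨b, ⟨hbJ, hb⟩, rfl⟩
    rw [edist_dist]
    apply ENNReal.ofReal_le_ofReal
    rw [mem_ball] at ha hb
    have hab : dist a b < c := by
      linarith [dist_triangle_right a b (x + p)]
    calc dist (g a) (g b) ≤ dist (f a) (f b) := dist_dist_dist_le_left _ _ _
      _ ≤ d * dist a b := hf a haJ b hbJ hab
      _ ≤ d * c := mul_le_mul_of_nonneg_left hab.le hd
  have hvol : ENNReal.ofReal (g y) ≤ ENNReal.ofReal (t.card * c * d) := by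
    calc ENNReal.ofReal (g y) = MeasureTheory.volume (Icc 0 (g y)) := by simp
      _ ≤ MeasureTheory.volume (⋃ p ∈ t, g '' (J ∩ ball (x + p) (c / 2))) :=
        MeasureTheory.measure_mono (hsub.trans hcov)
      _ ≤ ∑ p ∈ t, MeasureTheory.volume (g '' (J ∩ ball (x + p) (c / 2))) :=
        MeasureTheory.measure_biUnion_finset_le _ _
      _ ≤ ∑ _p ∈ t, ENNReal.ofReal (d * c) := Finset.sum_le_sum hpiece
      _ = ENNReal.ofReal (t.card * c * d) := by
        rw [Finset.sum_const, nsmul_eq_mul, ← ENNReal.ofReal_natCast,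
          ← ENNReal.ofReal_mul (Nat.cast_nonneg _)]
        congr 1
        ring
  rw [dist_comm]
  exact (ENNReal.ofReal_le_ofReal_iff (by positivity)).1 hvol

/-! ### Convergence of the coding maps -/

/-- Under (P.1) and (P.2), the perturbed coding maps converge uniformly
to the unperturbed one: `sup_{ω ∈ X^{V̂}} |π(ε,ω) − π(ω)| → 0` as `ε → 0`. -/
theorem coding_maps_converge
    {D : ℕ} {V : Type*} [Countable V] (P : PertGIFS D V)
    (π : (ℕ → V) → Pt D) (hπ : IsCodingMap P.EE P.J P.T π)
    (πε : ℝ → (ℕ → V) → Pt D)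
    (hπε : ∀ ε ∈ Set.Ioo (0 : ℝ) 1, IsCodingMap P.EE (P.Jε ε) (P.Tε ε) (πε ε)) :
    ∀ δ > 0, ∃ ε₀ > 0, ∀ ε ∈ Set.Ioo (0 : ℝ) 1, ε < ε₀ →
      ∀ ω ∈ TMS P.EE, dist (πε ε ω) (π ω) ≤ δ := by
  intro δ hδ
  obtain ⟨c, hc0, hc, hcc⟩ := P.hJO
  obtain ⟨K, hK⟩ := P.J_diam
  obtain ⟨N, hN0, hN⟩ := exists_diam_image_bound D K hc0
  have hρ0 : 0 ≤ max P.r 0 := le_max_right _ _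
  have hρ1 : max P.r 0 < 1 := max_lt P.hr zero_lt_one
  obtain ⟨n, hn⟩ : ∃ n : ℕ, max P.r 0 ^ (n + 1) * (N + P.cpcd) < δ / 2 := by
    have h := ((tendsto_pow_atTop_nhds_zero_of_lt_one hρ0 hρ1).comp
      (tendsto_add_atTop_nat 1)).mul_const (N + P.cpcd)
    rw [zero_mul] at h
    exact (h.eventually (gt_mem_nhds (half_pos hδ))).exists
  -- The margin `c - cpcd` keeps the accumulated error inside the region of contraction.
  obtain ⟨Δ, hΔ0, hΔδ, hΔc⟩ : ∃ Δ > 0, Δ ≤ δ / 2 ∧ Δ < c - P.cpcd := by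
    have : 0 < c - P.cpcd := by linarith
    exact ⟨min (δ / 2) ((c - P.cpcd) / 2), by positivity, min_le_left _ _,
      (min_le_right _ _).trans_lt (by linarith)⟩
  obtain ⟨ε₁, hε₁, h_iii⟩ := P.p_iii (Δ * (1 - max P.r 0)) (mul_pos hΔ0 (by linarith))
  obtain ⟨ε₂, hε₂, h_ii⟩ := P.p_ii
  refine ⟨min ε₁ ε₂, lt_min hε₁ hε₂, ?_⟩
  intro ε hε hεlt ω hω
  have hclose := h_iii ε hε (hεlt.trans_le (min_le_left _ _))
  have hthick := h_ii ε hε (hεlt.trans_le (min_le_right _ _))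
  have hpert := dist_vcomp_perturbed_le P hc hε hΔc hthick hclose ω
  have hπmem : ∀ k, π ω ∈ vcomp P.T ω (k + 1) '' P.J (ω (k + 1)) := by
    have h : π ω ∈ ⋂ k : ℕ, vcomp P.T ω (k + 1) '' P.J (ω (k + 1)) := by
      rw [hπ ω hω]; exact mem_singleton _
    exact mem_iInter.1 h
  have hπεmem : ∀ k, πε ε ω ∈ vcomp (P.Tε ε) ω (k + 1) '' P.Jε ε (ω (k + 1)) := by
    have h : πε ε ω ∈ ⋂ k : ℕ, vcomp (P.Tε ε) ω (k + 1) '' P.Jε ε (ω (k + 1)) := by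
      rw [hπε ε hε ω hω]; exact mem_singleton _
    exact mem_iInter.1 h
  by_cases hE : ∀ i < n + 1, P.E₀ (ω i) (ω (i + 1))
  · obtain ⟨y, hy, hyπ⟩ := hπmem n
    obtain ⟨x, hx, hxπ⟩ := hπεmem n
    obtain ⟨z, hz, hxz⟩ := Metric.mem_thickening_iff.1 (hthick _ hx)
    have hcontr := dist_vcomp_le P hc ω (n + 1) hE
    have h1 := hpert (n + 1) hE x hx x (by simpa using hΔ0.le)
    have h2 := hcontr z hz x (hxz.trans hcc)
    have h3 := hN _ (P.J_conn (ω (n + 1))).isPreconnected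
      (fun a ha b hb => (dist_le_diam_of_mem (P.J_cpt _).isBounded ha hb).trans (hK _))
      (vcomp P.T ω (n + 1)) _ (pow_nonneg hρ0 (n + 1))
      (fun a _ b hb hab => hcontr b hb a hab) z hz y hy
    have h4 : max P.r 0 ^ (n + 1) * dist x z ≤ max P.r 0 ^ (n + 1) * P.cpcd :=
      mul_le_mul_of_nonneg_left hxz.le (pow_nonneg hρ0 _)
    rw [← hyπ, ← hxπ]
    rw [dist_comm] at h1
    linarith [dist_triangle4 (vcomp (P.Tε ε) ω (n + 1) x) (vcomp P.T ω (n + 1) x)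
      (vcomp P.T ω (n + 1) z) (vcomp P.T ω (n + 1) y)]
  · -- The least degenerate edge; only unperturbed edges precede it.
    have hex : ∃ j, ¬ P.E₀ (ω j) (ω (j + 1)) := by
      push Not at hE
      obtain ⟨i, -, hi⟩ := hE
      exact ⟨i, hi⟩
    classical
    obtain ⟨j, hj, hmin⟩ : ∃ j, ¬ P.E₀ (ω j) (ω (j + 1)) ∧ ∀ i < j, P.E₀ (ω i) (ω (i + 1)) :=
      ⟨Nat.find hex, Nat.find_spec hex, fun i hi => not_not.1 (Nat.find_min hex hi)⟩
    obtain ⟨y, -, hyπ⟩ := hπmem j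
    obtain ⟨x, hx, hxπ⟩ := hπεmem j
    have hΔle : Δ * (1 - max P.r 0) ≤ Δ := mul_le_of_le_one_right hΔ0.le (by linarith)
    have hstep := hclose (hω j) x hx
    rw [P.hTconst (hω j) hj x, ← P.hTconst (hω j) hj y, dist_comm] at hstep
    have h := hpert j hmin _ (P.pT_J ε hε (hω j) (mem_image_of_mem _ hx)) _ (hstep.trans hΔle)
    rw [← hyπ, ← hxπ, dist_comm]
    exact h.trans (by linarith)
end

section
/- Assume conditions (P.1) and (P.2), and define φ(ε,ω) := log‖T′_{ω₀ω₁}(ε, π(ε,σω))‖ for ω ∈ X^{V̂}. Then there exists a constant C > 0 such that for all sufficiently small ε ∈ (0,1) and all n ≥ 2, var_n φ(ε,·) ≤ C·(r₁^β)^n, where var_n f := sup{|f(ω) − f(υ)| : ω,υ ∈ X^{V̂}, ω_i = υ_i for i = 0,…,n−1}; that is, sup_{ε} [φ(ε,·)]_2 < ∞ with respect to the metric parameter θ = r₁^β. -/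
/-! The statement is a bounded distortion estimate. If `ω` and `υ` share their first `n` letters,
then `π(ε,σω)` and `π(ε,συ)` are images of two points of `J_{ω_{n-1}}(ε)` under one and the same
composition of `n - 2` contractions, and the distortion hypothesis `p_vi`
turns their distance into a bound for the difference of the logarithms.
So the whole issue is to bound the diameter of the image by `const * r₁ ^ (n - 2)`,
uniformly in `ε`, although the derivative bound `r₁` is only available on the sets `J_v(ε)`,
which need not be convex nor path connected.

For two points `x, y` of `J_u(ε)` at distance `d ≤ δ`, the ball of radius `d` around `x` lies in
`O_u(ε)` by `p_i`, and `p_vi` bounds the derivative there by `r₁ (1 + c'' d^β)`. As images of points of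
`J` lie in `J` again, this can be iterated; for `δ` small the distances decay geometrically, so the
product of the distortion factors converges and `d` is contracted to at most
`r₁ ^ k * exp (B d^β) * d` (`dist_vcomp_le`). To pass from distance `δ` to arbitrary points of
the connected set `J_v(ε)`, cover it by a number `N` of `δ/2`-balls that depends only on the uniform
bound for the diameters: the image is connected and covered by `N` pieces of small diameter, whence
its diameter is at most `N` times as large (`exists_chain_bound`). -/

open scoped ENNReal NNReal Topology
open Filter Set Metric

/-- Two points of a connected set of diameter at most `R` can be joined by boundedly many steps of
length less than `δ`; here in the form of a bound for the oscillation of a function. The real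
function `dist (f x) (f ·)` has an interval as its range, covered by `N` sets of length at
most `M`. -/
lemma exists_chain_bound {D : ℕ} (R δ : ℝ) (hδ : 0 < δ) :
    ∃ N : ℕ, ∀ (S : Set (Pt D)) (f : Pt D → Pt D) (M : ℝ), IsPreconnected S →
      ContinuousOn f S → 0 ≤ M → (∀ x ∈ S, ∀ y ∈ S, dist x y ≤ R) →
      (∀ x ∈ S, ∀ y ∈ S, dist x y < δ → dist (f x) (f y) ≤ M) →
      ∀ x ∈ S, ∀ y ∈ S, dist (f x) (f y) ≤ N * M := by
  obtain ⟨t, htf, ht⟩ := Metric.totallyBounded_iff.1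
    (isCompact_closedBall (0 : Pt D) R).totallyBounded (δ / 2) (by positivity)
  refine ⟨htf.toFinset.card, fun S f M hS hf hM hR hloc x hx y hy => ?_⟩
  let g : Pt D → ℝ := fun z => dist (f x) (f z)
  have hg : ContinuousOn g S := (continuous_const.dist continuous_id).comp_continuousOn hf
  have hsub : Icc (0 : ℝ) (dist (f x) (f y)) ⊆ g '' S := by
    have h := (hS.image g hg).ordConnected.out (mem_image_of_mem g hx) (mem_image_of_mem g hy)
    simpa [g] using h
  have hcov : g '' S ⊆ ⋃ c ∈ htf.toFinset, g '' (S ∩ ball (x + c) (δ / 2)) := by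
    rintro _ ⟨z, hz, rfl⟩
    have hzb : z - x ∈ closedBall (0 : Pt D) R := by
      simpa [dist_eq_norm] using hR z hz x hx
    obtain ⟨c, hc, hzc⟩ := mem_iUnion₂.1 (ht hzb)
    refine mem_iUnion₂.2 ⟨c, by simpa using hc, z, ⟨hz, ?_⟩, rfl⟩
    rw [mem_ball, dist_eq_norm] at hzc ⊢
    rwa [← sub_sub]
  have hvol : ENNReal.ofReal (dist (f x) (f y)) ≤
      ENNReal.ofReal (htf.toFinset.card * M) := by
    calc ENNReal.ofReal (dist (f x) (f y))
        = MeasureTheory.volume (Icc (0 : ℝ) (dist (f x) (f y))) := by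
          rw [Real.volume_Icc, sub_zero]
      _ ≤ MeasureTheory.volume (⋃ c ∈ htf.toFinset, g '' (S ∩ ball (x + c) (δ / 2))) :=
          MeasureTheory.measure_mono (hsub.trans hcov)
      _ ≤ ∑ c ∈ htf.toFinset, MeasureTheory.volume (g '' (S ∩ ball (x + c) (δ / 2))) :=
          MeasureTheory.measure_biUnion_finset_le _ _
      _ ≤ ∑ c ∈ htf.toFinset, ENNReal.ofReal M := by
          refine Finset.sum_le_sum fun c _ => (Real.volume_le_diam _).trans ?_
          refine Metric.ediam_le ?_
          rintro _ ⟨z, ⟨hz, hzc⟩, rfl⟩ _ ⟨w, ⟨hw, hwc⟩, rfl⟩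
          rw [edist_dist]
          refine ENNReal.ofReal_le_ofReal ?_
          have hzw : dist z w < δ := by
            have := dist_triangle_right z w (x + c)
            rw [mem_ball] at hzc hwc
            linarith
          calc dist (g z) (g w) ≤ dist (f z) (f w) := by
                simpa [g, dist_comm, Real.dist_eq] using abs_dist_sub_le (f z) (f w) (f x)
            _ ≤ M := hloc z hz w hw hzw
      _ = ENNReal.ofReal (htf.toFinset.card * M) := by
          rw [Finset.sum_const, nsmul_eq_mul, ENNReal.ofReal_mul (by positivity),
            ENNReal.ofReal_natCast]
  exact (ENNReal.ofReal_le_ofReal_iff (by positivity)).1 hvol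

lemma continuousOn_vcomp {D : ℕ} {V : Type*} (P : PertGIFS D V) {ε : ℝ} (hε : ε ∈ Ioo (0 : ℝ) 1)
    {ω : ℕ → V} (hω : ω ∈ TMS P.EE) (k : ℕ) :
    ContinuousOn (vcomp (P.Tε ε) ω k) (P.Jε ε (ω k)) := by
  induction k with
  | zero => exact continuousOn_id
  | succ k ih =>
    obtain ⟨c, hc, hJO⟩ := P.pJO ε hε
    refine ih.comp ((P.pT_diff ε hε (hω k)).continuousOn.mono fun x hx => ?_)
      (mapsTo_iff_image_subset.2 (P.pT_J ε hε (hω k)))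
    by_contra h
    have := hJO _ x hx x h
    rw [dist_self] at this
    linarith

/-- One contraction step between nearby points of a seed set: the mean value inequality on the
ball of radius `dist x y` around `x`, where the distortion hypothesis `p_vi` controls the
derivative. -/
lemma dist_step_le {D : ℕ} {V : Type*} (P : PertGIFS D V) {ε c : ℝ} (hε : ε ∈ Ioo (0 : ℝ) 1)
    (hJO : ∀ v, ∀ x ∈ P.Jε ε v, ∀ y ∉ P.Oε ε v, c ≤ dist x y)
    (hder : ∀ ⦃v u⦄, P.EE v u → ∀ x ∈ P.Jε ε u, ‖fderiv ℝ (P.Tε ε v u) x‖ ≤ P.r₁)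
    {v u : V} (hvu : P.EE v u) {x y : Pt D} (hx : x ∈ P.Jε ε u) (hxy : dist x y < c) :
    dist (P.Tε ε v u x) (P.Tε ε v u y) ≤
      P.r₁ * (1 + P.c'' * dist x y ^ P.β) * dist x y := by
  have hr₁ := P.hr₁pos
  have hc'' := P.hc''
  have hβ := P.hβ.1
  have hball : closedBall x (dist x y) ⊆ P.Oε ε u := by
    intro z hz
    by_contra h
    have h1 := hJO u x hx z h
    rw [mem_closedBall, dist_comm] at hz
    linarith
  have hxO : x ∈ P.Oε ε u := hball (mem_closedBall_self dist_nonneg)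
  have hmv := (convex_closedBall x (dist x y)).norm_image_sub_le_of_norm_fderiv_le (𝕜 := ℝ)
    (f := P.Tε ε v u) (C := P.r₁ * (1 + P.c'' * dist x y ^ P.β)) (x := y) (y := x)
    (fun z hz => ((P.pT_diff ε hε hvu).differentiableOn one_ne_zero).differentiableAt
      ((P.pO_open ε hε u).mem_nhds (hball hz)))
    (fun z hz => by
      have h1 := P.p_vi ε hε hvu x hxO z (hball hz)
      have h2 := hder hvu x hx
      have h3 : dist x z ^ P.β ≤ dist x y ^ P.β :=
        Real.rpow_le_rpow dist_nonneg (by rwa [dist_comm]) hβ.le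
      have h4 : P.c'' * ‖fderiv ℝ (P.Tε ε v u) x‖ * dist x z ^ P.β ≤
          P.c'' * P.r₁ * dist x y ^ P.β := by gcongr
      have h5 := (abs_le.1 h1).1
      linarith)
    (by rw [mem_closedBall, dist_comm]) (mem_closedBall_self dist_nonneg)
  simpa [dist_eq_norm] using hmv

/-- Iterated contraction of nearby points. The constant `B` in the distortion factor solves
`B q^β + c'' = B`, which is what the induction step needs. -/
lemma dist_vcomp_le_s7 {D : ℕ} {V : Type*} (P : PertGIFS D V) {ε c δ q B : ℝ}
    (hε : ε ∈ Ioo (0 : ℝ) 1)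
    (hJO : ∀ v, ∀ x ∈ P.Jε ε v, ∀ y ∉ P.Oε ε v, c ≤ dist x y)
    (hder : ∀ ⦃v u⦄, P.EE v u → ∀ x ∈ P.Jε ε u, ‖fderiv ℝ (P.Tε ε v u) x‖ ≤ P.r₁)
    (hδc : δ < c) (hq : P.r₁ * (1 + P.c'' * δ ^ P.β) = q) (hq0 : 0 < q) (hq1 : q < 1)
    (hB0 : 0 ≤ B) (hB : B * q ^ P.β + P.c'' = B)
    {ω : ℕ → V} (hω : ω ∈ TMS P.EE) (k : ℕ) :
    ∀ x ∈ P.Jε ε (ω k), ∀ y ∈ P.Jε ε (ω k), dist x y ≤ δ →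
      dist (vcomp (P.Tε ε) ω k x) (vcomp (P.Tε ε) ω k y) ≤
        P.r₁ ^ k * Real.exp (B * dist x y ^ P.β) * dist x y := by
  have hr₁ := P.hr₁pos
  have hc'' := P.hc''
  have hβ := P.hβ.1
  induction k with
  | zero =>
    intro x _ y _ _
    have : 1 ≤ Real.exp (B * dist x y ^ P.β) := Real.one_le_exp (by positivity)
    simpa [vcomp] using le_mul_of_one_le_left dist_nonneg this
  | succ k ih =>
    intro x hx y hy hxy
    set T := P.Tε ε (ω k) (ω (k + 1)) with hT
    have hTx : T x ∈ P.Jε ε (ω k) := P.pT_J ε hε (hω k) (mem_image_of_mem _ hx)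
    have hTy : T y ∈ P.Jε ε (ω k) := P.pT_J ε hε (hω k) (mem_image_of_mem _ hy)
    have hstep : dist (T x) (T y) ≤ P.r₁ * (1 + P.c'' * dist x y ^ P.β) * dist x y :=
      dist_step_le P hε hJO hder (hω k) hx (hxy.trans_lt hδc)
    have hqd : dist (T x) (T y) ≤ q * dist x y := by
      refine hstep.trans ?_
      rw [← hq]
      gcongr
    have hTδ : dist (T x) (T y) ≤ δ :=
      (hqd.trans (mul_le_of_le_one_left dist_nonneg hq1.le)).trans hxy
    have hpow : dist (T x) (T y) ^ P.β ≤ q ^ P.β * dist x y ^ P.β := by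
      rw [← Real.mul_rpow hq0.le dist_nonneg]
      exact Real.rpow_le_rpow dist_nonneg hqd hβ.le
    have hone : 1 + P.c'' * dist x y ^ P.β ≤ Real.exp (P.c'' * dist x y ^ P.β) := by
      linarith [Real.add_one_le_exp (P.c'' * dist x y ^ P.β)]
    calc dist (vcomp (P.Tε ε) ω k (T x)) (vcomp (P.Tε ε) ω k (T y))
        ≤ P.r₁ ^ k * Real.exp (B * dist (T x) (T y) ^ P.β) * dist (T x) (T y) :=
          ih _ hTx _ hTy hTδ
      _ ≤ P.r₁ ^ k * Real.exp (B * (q ^ P.β * dist x y ^ P.β)) *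
          (P.r₁ * Real.exp (P.c'' * dist x y ^ P.β) * dist x y) := by
          gcongr
          exact hstep.trans (by gcongr)
      _ = P.r₁ ^ (k + 1) * Real.exp ((B * q ^ P.β + P.c'') * dist x y ^ P.β) * dist x y := by
          rw [show (B * q ^ P.β + P.c'') * dist x y ^ P.β =
            B * (q ^ P.β * dist x y ^ P.β) + P.c'' * dist x y ^ P.β by ring, Real.exp_add]
          ring
      _ = _ := by rw [hB]

lemma coding_mem {D : ℕ} {V : Type*} (P : PertGIFS D V) {ε : ℝ} (hε : ε ∈ Ioo (0 : ℝ) 1)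
    {π : (ℕ → V) → Pt D} (hπ : IsCodingMap P.EE (P.Jε ε) (P.Tε ε) π)
    {ω : ℕ → V} (hω : ω ∈ TMS P.EE) (k : ℕ) :
    π ω ∈ vcomp (P.Tε ε) ω k '' P.Jε ε (ω k) := by
  have h : π ω ∈ ⋂ k : ℕ, vcomp (P.Tε ε) ω (k + 1) '' P.Jε ε (ω (k + 1)) := by
    rw [hπ ω hω]; rfl
  have hk := mem_iInter.1 h k
  obtain ⟨x, hx, hxe⟩ := hk
  exact ⟨_, P.pT_J ε hε (hω k) (mem_image_of_mem _ hx), hxe⟩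

lemma vcomp_congr {D : ℕ} {V : Type*} (T : V → V → Pt D → Pt D) {ω υ : ℕ → V} (k : ℕ)
    (h : ∀ i ≤ k, ω i = υ i) : vcomp T ω k = vcomp T υ k := by
  induction k with
  | zero => rfl
  | succ k ih =>
    rw [vcomp, vcomp, ih fun i hi => h i (by lia), h k (by lia), h (k + 1) le_rfl]

/-- Also valid for `a = 0` or `b = 0`, since then both vanish. -/
lemma abs_log_sub_log_le {a b s : ℝ} (ha : 0 ≤ a) (hb : 0 ≤ b) (hs : 0 ≤ s)
    (h1 : |a - b| ≤ s * a) (h2 : |b - a| ≤ s * b) : |Real.log a - Real.log b| ≤ s := by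
  rcases ha.eq_or_lt with rfl | ha
  · have : b = 0 := by simpa using h1
    simpa [this] using hs
  rcases hb.eq_or_lt with rfl | hb
  · have : a = 0 := by simpa using h2
    simpa [this] using hs
  have key : ∀ {a b : ℝ}, 0 < a → 0 < b → |a - b| ≤ s * b → Real.log a - Real.log b ≤ s := by
    intro a b ha hb h
    rw [← Real.log_div ha.ne' hb.ne']
    have h3 := Real.log_le_sub_one_of_pos (div_pos ha hb)
    have h4 : a / b ≤ 1 + s := by
      rw [div_le_iff₀ hb]
      linarith [le_abs_self (a - b)]
    linarith
  rw [abs_le]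
  have h3 := key ha hb (by rwa [abs_sub_comm])
  have h4 := key hb ha (by rwa [abs_sub_comm])
  constructor <;> linarith

/-- Under (P.1) and (P.2), the perturbed potentials
`φ(ε,ω) = log ‖T'_{ω₀ω₁}(ε, π(ε,σω))‖` have uniformly bounded weak Lipschitz seminorm
`[φ(ε,·)]₂` with respect to the metric parameter `θ = r₁^β`. -/
theorem perturbed_potential_var_bound
    {D : ℕ} {V : Type*} [Countable V] (P : PertGIFS D V)
    (πε : ℝ → (ℕ → V) → Pt D)
    (hπε : ∀ ε ∈ Set.Ioo (0 : ℝ) 1, IsCodingMap P.EE (P.Jε ε) (P.Tε ε) (πε ε)) :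
    ∃ C > 0, ∃ ε₀ > 0, ∀ ε ∈ Set.Ioo (0 : ℝ) 1, ε < ε₀ →
      ∀ n : ℕ, 2 ≤ n → ∀ ω ∈ TMS P.EE, ∀ υ ∈ TMS P.EE, (∀ i < n, ω i = υ i) →
        |phiEps P πε ε ω - phiEps P πε ε υ| ≤ C * (P.r₁ ^ P.β) ^ n := by
  have hr₁ := P.hr₁pos
  have hc'' := P.hc''
  have hβ := P.hβ.1
  obtain ⟨e₁, he₁, c, hc, hJO⟩ := P.p_i
  obtain ⟨e₂, he₂, hthick⟩ := P.p_ii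
  obtain ⟨e₃, he₃, hder⟩ := P.p_v
  obtain ⟨d, hd⟩ := P.J_diam
  obtain ⟨δ, hδ0, hδc, hδq⟩ : ∃ δ : ℝ, 0 < δ ∧ δ < c ∧ P.r₁ * (1 + P.c'' * δ ^ P.β) < 1 := by
    have hcont : ContinuousAt (fun δ : ℝ => P.r₁ * (1 + P.c'' * δ ^ P.β)) 0 :=
      continuousAt_const.mul (continuousAt_const.add
        (continuousAt_const.mul (Real.continuousAt_rpow_const 0 P.β (Or.inr hβ.le))))
    have h0 : P.r₁ * (1 + P.c'' * (0 : ℝ) ^ P.β) < 1 := by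
      simpa [Real.zero_rpow hβ.ne'] using P.hr₁
    have hev := (hcont.eventually_lt_const h0).filter_mono
      (nhdsWithin_le_nhds (s := Ioi (0 : ℝ)))
    obtain ⟨δ, h1, h2, h3⟩ := (hev.and (Ioo_mem_nhdsGT hc)).exists
    exact ⟨δ, h2, h3, h1⟩
  set q := P.r₁ * (1 + P.c'' * δ ^ P.β) with hq
  have hq0 : 0 < q := by positivity
  have hqβ : q ^ P.β < 1 := Real.rpow_lt_one hq0.le hδq hβ
  set B := P.c'' / (1 - q ^ P.β) with hBdef
  have h1q : 0 < 1 - q ^ P.β := by linarith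
  have hB0 : 0 ≤ B := by positivity
  have hB : B * q ^ P.β + P.c'' = B := by
    rw [hBdef]; field_simp; ring
  obtain ⟨N, hN⟩ := exists_chain_bound (D := D) (d + 2 * P.cpcd) δ hδ0
  set K := N * (Real.exp (B * δ ^ P.β) * δ) with hK
  have hK0 : 0 ≤ K := by positivity
  refine ⟨P.c'' * ((K + 1) / P.r₁ ^ 2) ^ P.β, by positivity, min e₁ (min e₂ e₃),
    by positivity, ?_⟩
  intro ε hε hεlt n hn ω hω υ hυ hωυ
  obtain ⟨hε1, hε2, hε3⟩ : ε < e₁ ∧ ε < e₂ ∧ ε < e₃ := by simpa using hεlt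
  obtain ⟨m, rfl⟩ : ∃ m, n = m + 2 := ⟨n - 2, by lia⟩
  have hJOε := hJO ε hε hε1
  -- the diameters of the perturbed seed sets are bounded uniformly in `v` and `ε`
  have hdiam : ∀ v, ∀ x ∈ P.Jε ε v, ∀ y ∈ P.Jε ε v, dist x y ≤ d + 2 * P.cpcd := by
    intro v x hx y hy
    obtain ⟨x', hx', hxx⟩ := mem_thickening_iff.1 (hthick ε hε hε2 v hx)
    obtain ⟨y', hy', hyy⟩ := mem_thickening_iff.1 (hthick ε hε hε2 v hy)
    have h1 := (dist_le_diam_of_mem (P.J_cpt v).isBounded hx' hy').trans (hd v)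
    have h2 := dist_triangle4_right x y x' y'
    linarith
  have hωs : (fun n => ω (n + 1)) ∈ TMS P.EE := fun k => hω (k + 1)
  have hυs : (fun n => υ (n + 1)) ∈ TMS P.EE := fun k => hυ (k + 1)
  set ω' : ℕ → V := fun n => ω (n + 1) with hω'
  set υ' : ℕ → V := fun n => υ (n + 1) with hυ'
  have hagree : ∀ i ≤ m, ω' i = υ' i := fun i hi => hωυ (i + 1) (by lia)
  have hdist : dist (πε ε ω') (πε ε υ') ≤ K * P.r₁ ^ m := by
    obtain ⟨x, hx, hxe⟩ := coding_mem P hε (hπε ε hε) hωs m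
    obtain ⟨y, hy, hye⟩ := coding_mem P hε (hπε ε hε) hυs m
    rw [← vcomp_congr _ m hagree] at hye
    rw [← hagree m le_rfl] at hy
    rw [← hxe, ← hye]
    have := hN (P.Jε ε (ω' m)) (vcomp (P.Tε ε) ω' m)
      (P.r₁ ^ m * Real.exp (B * δ ^ P.β) * δ) (P.pJ_conn ε hε _).isPreconnected
      (continuousOn_vcomp P hε hωs m) (by positivity) (hdiam _)
      (fun x hx y hy hxy => (dist_vcomp_le_s7 P hε hJOε (hder ε hε hε3) hδc hq.symm hq0 hδq
        hB0 hB hωs m x hx y hy hxy.le).trans (by gcongr))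
      x hx y hy
    refine this.trans_eq ?_
    rw [hK]; ring
  have hJsub : ∀ v, P.Jε ε v ⊆ P.Oε ε v := by
    intro v x hx
    by_contra h
    have := hJOε v x hx x h
    rw [dist_self] at this
    linarith
  have hmemω : πε ε ω' ∈ P.Oε ε (ω 1) := by
    obtain ⟨x, hx, hxe⟩ := coding_mem P hε (hπε ε hε) hωs 0
    exact hxe ▸ hJsub _ hx
  have hmemυ : πε ε υ' ∈ P.Oε ε (ω 1) := by
    obtain ⟨x, hx, hxe⟩ := coding_mem P hε (hπε ε hε) hυs 0
    rw [hωυ 1 (by lia)]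
    exact hxe ▸ hJsub _ hx
  unfold phiEps
  rw [← hωυ 0 (by lia), ← hωυ 1 (by lia)]
  refine (abs_log_sub_log_le (norm_nonneg _) (norm_nonneg _)
    (s := P.c'' * dist (πε ε ω') (πε ε υ') ^ P.β) (by positivity)
    ((P.p_vi ε hε (hω 0) _ hmemω _ hmemυ).trans_eq (by ring))
    ((P.p_vi ε hε (hω 0) _ hmemυ _ hmemω).trans_eq (by rw [dist_comm]; ring))).trans ?_
  have hfin : dist (πε ε ω') (πε ε υ') ≤ (K + 1) / P.r₁ ^ 2 * P.r₁ ^ (m + 2) := by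
    have h1 : (K + 1) / P.r₁ ^ 2 * P.r₁ ^ (m + 2) = (K + 1) * P.r₁ ^ m := by
      rw [pow_add]; field_simp
    rw [h1]
    refine hdist.trans ?_
    gcongr
    linarith
  calc P.c'' * dist (πε ε ω') (πε ε υ') ^ P.β
      ≤ P.c'' * ((K + 1) / P.r₁ ^ 2 * P.r₁ ^ (m + 2)) ^ P.β := by gcongr
    _ = P.c'' * ((K + 1) / P.r₁ ^ 2) ^ P.β * (P.r₁ ^ P.β) ^ (m + 2) := by
      rw [Real.mul_rpow (by positivity) (by positivity), ← Real.rpow_natCast_mul hr₁.le,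
        mul_comm ((m + 2 : ℕ) : ℝ), Real.rpow_mul_natCast hr₁.le, mul_assoc]
end
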